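/- Let T < ∞ and let ρ : [0,T) × ℝ → (0,∞) be a smooth solution of the renormalized curvature flow PDE ∂_t ρ = ρ² ∂²_θ ρ + ρ²(ρ − 2h_t), 2π-periodic in θ and satisfying the closure conditions for every t. Then for every n ∈ ℕ, the n-th spatial derivative of the curvature is uniformly bounded: sup { |∂_θⁿ ρ(t,θ)| : θ ∈ ℝ, t ∈ [0,T) } < ∞. -/

import Mathlib

/-!
The curvature is bounded up to the finite time `T`, together with all its spatial derivatives.

*Geometry.* Differentiating under the integral sign gives `λ' = -2π + 2σ²/λ` and
`σ' = 4πh - ∫ ρ`. By the isoperimetric inequality (`isoperimetric`) the area increases, so it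
stays bounded below, and `σ' ≤ (4π/λ) σ` bounds the perimeter on `[0,T)`; hence `h` is bounded
(`geometry_bounds`). Centred at its arclength centroid, a closed convex curve has support
function at least `λ/σ` (`exists_center`), so near time `T` a fixed point can be kept well inside
the curve, and a support function `P` with respect to it satisfies `∂_t P = -(ρ - 2h)`
(`exists_support`).

*Curvature.* A maximum principle on `[t₀,T) × ℝ` for functions periodic in space
(`max_principle`, `upper_bound`) drives everything else. Tso's quotient `ρ/(P - c)`, with `c` a
positive constant below the minimum of `P`, cannot exceed a fixed constant, which bounds `ρ`
from above (`curvature_bound`). The equation `∂_t (1/ρ) = -(∂²_θ ρ + ρ - 2h)` bounds it from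
below (`lower_bound`).

*Derivatives.* For `∂_θ ρ` the maximum principle applies directly (`first_bound`). The equation
of `v = ∂²_θ ρ` contains the quadratic term `2ρv²`; it helps from below, and from above it is
absorbed by the Bernstein-type quantity `v + A (∂_θ ρ)²` (`second_bound`). From order three on
the equation of the `n`-th derivative is linear in that derivative, up to terms vanishing or
having a sign at a maximum, with coefficients controlled by lower orders (`time_linear`), so
induction concludes (`all_bounds`). On `[0,t₀]` the bounds hold by compactness.
-/

open Real Set Filter MeasureTheory Topology NNReal

/-- The perimeter of the strictly convex curve with curvature function `ρ`
in tangent-angle coordinates: `σ = ∫₀^{2π} dθ/ρ(θ)`. -/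
noncomputable def perim (ρ : ℝ → ℝ) : ℝ := ∫ θ in (0:ℝ)..(2 * π), 1 / ρ θ

/-- The curve associated to a curvature function `ρ` in tangent-angle coordinates:
`C(θ) = (∫₀^θ cos β/ρ(β) dβ, ∫₀^θ sin β/ρ(β) dβ)`. -/
noncomputable def curveP (ρ : ℝ → ℝ) (θ : ℝ) : ℝ × ℝ :=
  (∫ β in (0:ℝ)..θ, Real.cos β / ρ β, ∫ β in (0:ℝ)..θ, Real.sin β / ρ β)

/-- The enclosed area `λ = ½ ∫₀^{2π} ⟨C(θ), ν(θ)⟩/ρ(θ) dθ`, with outward normal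
`ν(θ) = (sin θ, −cos θ)`. -/
noncomputable def encArea (ρ : ℝ → ℝ) : ℝ :=
  (1 / 2) * ∫ θ in (0:ℝ)..(2 * π),
    ((curveP ρ θ).1 * Real.sin θ - (curveP ρ θ).2 * Real.cos θ) / ρ θ

/-- The ratio `h = σ/λ`. -/
noncomputable def hRatio (ρ : ℝ → ℝ) : ℝ := perim ρ / encArea ρ

/-- `ρ : [0,T) × ℝ → (0,∞)` is a smooth solution of the renormalized curvature flow PDE
`∂_t ρ = ρ² ∂²_θ ρ + ρ²(ρ − 2 h_t)`, `2π`-periodic in `θ` and satisfying the closure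
conditions for every `t`. -/
def IsRCFSolution (T : ℝ) (ρ : ℝ → ℝ → ℝ) : Prop :=
  ContDiffOn ℝ (⊤ : ℕ∞) (Function.uncurry ρ) (Ico 0 T ×ˢ (univ : Set ℝ)) ∧
  (∀ t ∈ Ico (0:ℝ) T, ∀ θ : ℝ, 0 < ρ t θ) ∧
  (∀ t ∈ Ico (0:ℝ) T, ∀ θ : ℝ, ρ t (θ + 2 * π) = ρ t θ) ∧
  (∀ t ∈ Ico (0:ℝ) T, (∫ θ in (0:ℝ)..(2 * π), Real.cos θ / ρ t θ) = 0) ∧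
  (∀ t ∈ Ico (0:ℝ) T, (∫ θ in (0:ℝ)..(2 * π), Real.sin θ / ρ t θ) = 0) ∧
  (∀ t ∈ Ico (0:ℝ) T, ∀ θ : ℝ,
    HasDerivWithinAt (fun s => ρ s θ)
      ((ρ t θ) ^ 2 * iteratedDeriv 2 (ρ t) θ + (ρ t θ) ^ 2 * (ρ t θ - 2 * hRatio (ρ t)))
      (Ico 0 T) t)

/-! ### Maximum principle -/

/-- At a global maximum the first derivative vanishes and the second one is nonpositive. -/
lemma max_derivs {f f1 : ℝ → ℝ} {f2 x : ℝ} (h1 : ∀ y, HasDerivAt f (f1 y) y)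
    (h2 : HasDerivAt f1 f2 x) (hmax : ∀ y, f y ≤ f x) : f1 x = 0 ∧ f2 ≤ 0 := by
  have hlm : IsLocalMax f x := Filter.Eventually.of_forall hmax
  have hz : f1 x = 0 := hlm.hasDerivAt_eq_zero (h1 x)
  refine ⟨hz, ?_⟩
  by_contra! hpos
  have hd : deriv f = f1 := funext fun y => (h1 y).deriv
  have hmin : IsLocalMin f x :=
    isLocalMin_of_deriv_deriv_pos (by rw [hd, h2.deriv]; exact hpos) (by rw [hd, hz])
      (h1 x).continuousAt
  -- a point that is both a local minimum and a global maximum has a constant neighbourhood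
  have hconst : f =ᶠ[𝓝 x] fun _ => f x := by
    filter_upwards [hmin] with y hy
    exact le_antisymm (hmax y) hy
  have h3 : f1 =ᶠ[𝓝 x] fun _ => 0 := by
    have := hconst.deriv
    rw [hd] at this
    simpa using this
  have h4 := h2.congr_of_eventuallyEq h3.symm
  have := h4.unique (hasDerivAt_const x (0 : ℝ))
  linarith

/-- A continuous `2π`-periodic function is bounded above. -/
lemma periodic_bdd {f : ℝ → ℝ} (hf : Continuous f) (hper : ∀ θ, f (θ + 2 * π) = f θ) :
    ∃ M, ∀ θ, f θ ≤ M := by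
  obtain ⟨M, hM⟩ := (isCompact_Icc (a := (0 : ℝ)) (b := 2 * π)).bddAbove_image hf.continuousOn
  refine ⟨M, fun θ => ?_⟩
  obtain ⟨y, hy, hy'⟩ := Function.Periodic.exists_mem_Ico₀ (f := f) hper two_pi_pos θ
  rw [hy']
  exact hM ⟨y, ⟨hy.1, hy.2.le⟩, rfl⟩

/-- Parabolic maximum principle for periodic functions, in first-touching-time form: a negative
function whose time derivative is negative wherever it could touch zero from below stays
negative. -/
lemma max_principle {t0 T : ℝ} {F Ft F1 F2 : ℝ → ℝ → ℝ}
    (hc : ContinuousOn (Function.uncurry F) (Ico t0 T ×ˢ univ))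
    (hper : ∀ t ∈ Ico t0 T, ∀ θ, F t (θ + 2 * π) = F t θ)
    (hFt : ∀ t ∈ Ioo t0 T, ∀ θ, HasDerivAt (fun s => F s θ) (Ft t θ) t)
    (hF1 : ∀ t ∈ Ioo t0 T, ∀ θ, HasDerivAt (F t) (F1 t θ) θ)
    (hF2 : ∀ t ∈ Ioo t0 T, ∀ θ, HasDerivAt (F1 t) (F2 t θ) θ)
    (h0 : ∀ θ, F t0 θ < 0)
    (hstep : ∀ t ∈ Ioo t0 T, ∀ θ, F t θ = 0 → F1 t θ = 0 → F2 t θ ≤ 0 → Ft t θ < 0) :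
    ∀ t ∈ Ico t0 T, ∀ θ, F t θ < 0 := by
  intro t1 ht1 θ1
  by_contra! hcon
  -- the compact set of points of `[t0, t1] × [0, 2π]` where `F` is nonnegative
  set K : Set (ℝ × ℝ) := Icc t0 t1 ×ˢ Icc 0 (2 * π) with hK
  have hKc : IsCompact K := isCompact_Icc.prod isCompact_Icc
  have hKs : K ⊆ Ico t0 T ×ˢ univ := fun p hp => ⟨⟨hp.1.1, hp.1.2.trans_lt ht1.2⟩, mem_univ _⟩
  have hZc : IsCompact (K ∩ Function.uncurry F ⁻¹' Ici 0) :=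
    hKc.of_isClosed_subset ((hc.mono hKs).preimage_isClosed_of_isClosed hKc.isClosed isClosed_Ici)
      inter_subset_left
  have hred : ∀ t ∈ Ico t0 T, ∀ θ, ∃ θ' ∈ Icc 0 (2 * π), F t θ = F t θ' := by
    intro t ht θ
    obtain ⟨y, hy, hy'⟩ := Function.Periodic.exists_mem_Ico₀ (f := F t) (hper t ht) two_pi_pos θ
    exact ⟨y, ⟨hy.1, hy.2.le⟩, hy'⟩
  obtain ⟨θ1', hθ1', he1⟩ := hred t1 ht1 θ1
  obtain ⟨⟨s, θ⟩, ⟨hpK, hp0⟩, hmin⟩ := hZc.exists_isMinOn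
    ⟨(t1, θ1'), ⟨⟨⟨ht1.1, le_rfl⟩, hθ1'⟩, by simpa [he1] using hcon⟩⟩ continuous_fst.continuousOn
  have hsT : s ∈ Ico t0 T := (hKs hpK).1
  have hs1 : s ≤ t1 := hpK.1.2
  replace hp0 : 0 ≤ F s θ := hp0
  have hs0 : t0 < s := by
    rcases hsT.1.lt_or_eq with h | h
    · exact h
    · subst h; exact absurd hp0 (not_le.mpr (h0 θ))
  have hbefore : ∀ t ∈ Ico t0 s, ∀ φ, F t φ < 0 := by
    intro t ht φ
    by_contra! hcon'
    obtain ⟨φ', hφ', he⟩ := hred t ⟨ht.1, ht.2.trans hsT.2⟩ φ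
    have : s ≤ t := hmin (show (t, φ') ∈ _ from ⟨⟨⟨ht.1, ht.2.le.trans hs1⟩, hφ'⟩,
      by simpa [he] using hcon'⟩)
    exact absurd ht.2 (not_lt.mpr this)
  have hsI : s ∈ Ioo t0 T := ⟨hs0, hsT.2⟩
  have hev : ∀ᶠ t in 𝓝[<] s, t ∈ Ico t0 s :=
    mem_of_superset (Ioo_mem_nhdsLT hs0) Ioo_subset_Ico_self
  have hle : ∀ φ, F s φ ≤ 0 := by
    intro φ
    have hcont : Tendsto (fun t => F t φ) (𝓝[<] s) (𝓝 (F s φ)) :=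
      (hFt s hsI φ).continuousAt.tendsto.mono_left nhdsWithin_le_nhds
    exact le_of_tendsto hcont (hev.mono fun t ht => (hbefore t ht φ).le)
  have hF0 : F s θ = 0 := le_antisymm (hle θ) hp0
  obtain ⟨hz1, hz2⟩ := max_derivs (hF1 s hsI) (hF2 s hsI θ) (fun y => (hle y).trans hp0)
  have hneg := hstep s hsI θ hF0 hz1 hz2
  -- but the left difference quotients at the first touching time are nonnegative
  have hslope : Tendsto (slope (fun t => F t θ) s) (𝓝[<] s) (𝓝 (Ft s θ)) :=
    ((hasDerivAt_iff_tendsto_slope.mp (hFt s hsI θ))).mono_left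
      (nhdsWithin_mono _ fun x hx => ne_of_lt hx)
  have : 0 ≤ Ft s θ := by
    refine ge_of_tendsto hslope (hev.mono fun t ht => ?_)
    rw [slope_def_field, hF0]
    have := hbefore t ht θ
    exact div_nonneg_of_nonpos (by linarith) (by linarith [ht.2])
  linarith

/-- A periodic function whose growth rate at positive spatial maxima is at most affine in its value
is bounded above on a bounded time interval. -/
lemma upper_bound {t0 T C : ℝ} {Z Zt Z1 Z2 : ℝ → ℝ → ℝ} (hC : 0 ≤ C) (h0T : t0 < T)
    (hc : ContinuousOn (Function.uncurry Z) (Ico t0 T ×ˢ univ))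
    (hper : ∀ t ∈ Ico t0 T, ∀ θ, Z t (θ + 2 * π) = Z t θ)
    (hZt : ∀ t ∈ Ioo t0 T, ∀ θ, HasDerivAt (fun s => Z s θ) (Zt t θ) t)
    (hZ1 : ∀ t ∈ Ioo t0 T, ∀ θ, HasDerivAt (Z t) (Z1 t θ) θ)
    (hZ2 : ∀ t ∈ Ioo t0 T, ∀ θ, HasDerivAt (Z1 t) (Z2 t θ) θ)
    (hstep : ∀ t ∈ Ioo t0 T, ∀ θ, 0 < Z t θ → Z1 t θ = 0 → Z2 t θ ≤ 0 →
      Zt t θ ≤ C * (1 + Z t θ)) :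
    ∃ M, ∀ t ∈ Ico t0 T, ∀ θ, Z t θ ≤ M := by
  have hcont0 : Continuous (Z t0) := by
    have : ContinuousOn (fun θ : ℝ => Function.uncurry Z (t0, θ)) univ :=
      hc.comp (by fun_prop) (fun θ _ => ⟨⟨le_rfl, h0T⟩, mem_univ _⟩)
    simpa [continuousOn_univ] using this
  obtain ⟨M0, hM0⟩ := periodic_bdd hcont0 (hper t0 ⟨le_rfl, h0T⟩)
  -- barrier `M e^{(2C+1)(t-t0)}` with `M ≥ 1`, so that `C (1 + Z) < (2C+1) Z` at a contact point
  set M := max (M0 + 1) 1 with hM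
  have hM1 : 1 ≤ M := le_max_right _ _
  have key := max_principle (t0 := t0) (T := T)
    (F := fun t θ => Z t θ - M * Real.exp ((2 * C + 1) * (t - t0)))
    (Ft := fun t θ => Zt t θ - M * (Real.exp ((2 * C + 1) * (t - t0)) * ((2 * C + 1) * 1)))
    (F1 := Z1) (F2 := Z2)
    (by
      refine ContinuousOn.sub hc ?_
      exact Continuous.continuousOn (by fun_prop))
    (fun t ht θ => by rw [hper t ht θ])
    (fun t ht θ => (hZt t ht θ).sub
      ((((hasDerivAt_id t).sub_const t0).const_mul (2 * C + 1)).exp.const_mul M))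
    (fun t ht θ => (hZ1 t ht θ).sub_const _) hZ2
    (fun θ => by
      have := hM0 θ
      have := le_max_left (M0 + 1) 1
      simp; linarith)
    (fun t ht θ hF h1 h2 => by
      have hE : 1 ≤ Real.exp ((2 * C + 1) * (t - t0)) :=
        Real.one_le_exp (mul_nonneg (by linarith) (by linarith [ht.1]))
      have hME : 1 ≤ M * Real.exp ((2 * C + 1) * (t - t0)) := by nlinarith
      have hZe : Z t θ = M * Real.exp ((2 * C + 1) * (t - t0)) := by linarith
      have := hstep t ht θ (by rw [hZe]; linarith) h1 h2
      rw [← mul_assoc, ← hZe]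
      rw [← hZe] at hME
      nlinarith)
  refine ⟨M * Real.exp ((2 * C + 1) * (T - t0)), fun t ht θ => ?_⟩
  have h1 := key t ht θ
  have h2 : Real.exp ((2 * C + 1) * (t - t0)) ≤ Real.exp ((2 * C + 1) * (T - t0)) :=
    Real.exp_le_exp.mpr (mul_le_mul_of_nonneg_left (by linarith [ht.2]) (by linarith))
  have h3 := mul_le_mul_of_nonneg_left h2 (by linarith : 0 ≤ M)
  linarith

/-! ### Smoothness in the two variables -/

/-- The `θ`-derivative of a function smooth on `[0,T) × ℝ` exists and is again smooth there. -/
lemma smooth_theta {T : ℝ} {f : ℝ → ℝ → ℝ}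
    (hf : ContDiffOn ℝ (⊤ : ℕ∞) (Function.uncurry f) (Ico 0 T ×ˢ (univ : Set ℝ))) :
    (∀ t ∈ Ico 0 T, ∀ θ, HasDerivAt (f t) (deriv (f t) θ) θ) ∧
    ContDiffOn ℝ (⊤ : ℕ∞) (Function.uncurry fun t θ => deriv (f t) θ)
      (Ico 0 T ×ˢ (univ : Set ℝ)) := by
  set S : Set (ℝ × ℝ) := Ico 0 T ×ˢ (univ : Set ℝ) with hS
  have hu : UniqueDiffOn ℝ S := (uniqueDiffOn_Ico 0 T).prod uniqueDiffOn_univ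
  have hd : ∀ t ∈ Ico 0 T, ∀ θ,
      HasDerivAt (f t) (fderivWithin ℝ (Function.uncurry f) S (t, θ) (0, 1)) θ := by
    intro t ht θ
    have h1 : HasFDerivWithinAt (Function.uncurry f)
        (fderivWithin ℝ (Function.uncurry f) S (t, θ)) S (t, θ) :=
      ((hf.differentiableOn (by simp)) (t, θ) ⟨ht, mem_univ _⟩).hasFDerivWithinAt
    have h2 : HasDerivWithinAt (fun y : ℝ => (t, y)) ((0 : ℝ), (1 : ℝ)) univ θ :=
      ((hasDerivAt_const θ t).prodMk (hasDerivAt_id θ)).hasDerivWithinAt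
    have h3 := h1.comp_hasDerivWithinAt θ h2 (fun y _ => ⟨ht, mem_univ _⟩)
    exact hasDerivWithinAt_univ.mp h3
  refine ⟨fun t ht θ => by rw [(hd t ht θ).deriv]; exact hd t ht θ, ?_⟩
  have h1 : ContDiffOn ℝ (⊤ : ℕ∞) (fderivWithin ℝ (Function.uncurry f) S) S :=
    hf.fderivWithin hu (by simp)
  have h2 : ContDiffOn ℝ (⊤ : ℕ∞)
      (fun p => fderivWithin ℝ (Function.uncurry f) S p ((0 : ℝ), (1 : ℝ))) S :=
    h1.clm_apply contDiffOn_const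
  exact h2.congr fun p hp => (hd p.1 hp.1 p.2).deriv

lemma smooth_iter {T : ℝ} {f : ℝ → ℝ → ℝ}
    (hf : ContDiffOn ℝ (⊤ : ℕ∞) (Function.uncurry f) (Ico 0 T ×ˢ (univ : Set ℝ))) (n : ℕ) :
    ContDiffOn ℝ (⊤ : ℕ∞) (Function.uncurry fun t θ => iteratedDeriv n (f t) θ)
      (Ico 0 T ×ˢ (univ : Set ℝ)) := by
  induction n with
  | zero => simpa using hf
  | succ n ih =>
    simp only [iteratedDeriv_succ]
    exact (smooth_theta ih).2

lemma partial_t {E : Type*} [NormedAddCommGroup E] [NormedSpace ℝ E] {G : ℝ × ℝ → E}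
    {G' : ℝ × ℝ →L[ℝ] E} {t θ : ℝ} (h : HasFDerivAt G G' (t, θ)) :
    HasDerivAt (fun s => G (s, θ)) (G' (1, 0)) t :=
  HasFDerivAt.comp_hasDerivAt (f := fun s : ℝ => (s, θ)) t h
    ((hasDerivAt_id t).prodMk (hasDerivAt_const t θ))

lemma partial_θ {E : Type*} [NormedAddCommGroup E] [NormedSpace ℝ E] {G : ℝ × ℝ → E}
    {G' : ℝ × ℝ →L[ℝ] E} {t θ : ℝ} (h : HasFDerivAt G G' (t, θ)) :
    HasDerivAt (fun y => G (t, y)) (G' (0, 1)) θ :=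
  HasFDerivAt.comp_hasDerivAt (f := fun y : ℝ => (t, y)) θ h
    ((hasDerivAt_const θ t).prodMk (hasDerivAt_id θ))

/-- Schwarz's theorem: `∂_t ∂_θ f = ∂_θ ∂_t f` at interior times. -/
lemma mixed_partials {T : ℝ} {f A B : ℝ → ℝ → ℝ}
    (hf : ContDiffOn ℝ (⊤ : ℕ∞) (Function.uncurry f) (Ico 0 T ×ˢ (univ : Set ℝ)))
    (hA : ∀ t ∈ Ioo 0 T, ∀ θ, HasDerivAt (fun s => f s θ) (A t θ) t)
    (hB : ∀ t ∈ Ioo 0 T, ∀ θ, HasDerivAt (A t) (B t θ) θ) :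
    ∀ t ∈ Ioo 0 T, ∀ θ, HasDerivAt (fun s => deriv (f s) θ) (B t θ) t := by
  intro t ht θ
  set Ω : Set (ℝ × ℝ) := Ioo 0 T ×ˢ (univ : Set ℝ) with hΩ
  have hop : IsOpen Ω := isOpen_Ioo.prod isOpen_univ
  have hf' : ContDiffOn ℝ (⊤ : ℕ∞) (Function.uncurry f) Ω :=
    hf.mono (prod_mono Ioo_subset_Ico_self subset_rfl)
  have hat : ∀ p ∈ Ω, ContDiffAt ℝ (⊤ : ℕ∞) (Function.uncurry f) p :=
    fun p hp => hf'.contDiffAt (hop.mem_nhds hp)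
  set D := fderiv ℝ (Function.uncurry f) with hD
  have hmem : (t, θ) ∈ Ω := ⟨ht, mem_univ _⟩
  have hDd : DifferentiableAt ℝ D (t, θ) :=
    ((hat _ hmem).fderiv_right (m := 1) (by norm_cast)).differentiableAt (by simp)
  have hsym : IsSymmSndFDerivAt ℝ (Function.uncurry f) (t, θ) :=
    (hat _ hmem).isSymmSndFDerivAt (by simp; norm_cast)
  have hfd : ∀ p ∈ Ω, HasFDerivAt (Function.uncurry f) (D p) p :=
    fun p hp => ((hat p hp).differentiableAt (by simp)).hasFDerivAt
  have hDθ : ∀ s ∈ Ioo 0 T, ∀ y, deriv (f s) y = D (s, y) (0, 1) := fun s hs y =>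
    (partial_θ (hfd (s, y) ⟨hs, mem_univ _⟩)).deriv
  have hDt : ∀ y, A t y = D (t, y) (1, 0) := fun y =>
    (hA t ht y).unique (partial_t (hfd (t, y) ⟨ht, mem_univ _⟩))
  have h1 : HasDerivAt (fun s => D (s, θ) (0, 1)) (fderiv ℝ D (t, θ) (1, 0) (0, 1)) t := by
    simpa using (partial_t hDd.hasFDerivAt).clm_apply (hasDerivAt_const t ((0 : ℝ), (1 : ℝ)))
  have h2 : HasDerivAt (fun y => D (t, y) (1, 0)) (fderiv ℝ D (t, θ) (0, 1) (1, 0)) θ := by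
    simpa using (partial_θ hDd.hasFDerivAt).clm_apply (hasDerivAt_const θ ((1 : ℝ), (0 : ℝ)))
  have h3 : B t θ = fderiv ℝ D (t, θ) (0, 1) (1, 0) := by
    have h4 : A t = fun y => D (t, y) (1, 0) := funext hDt
    have h5 := hB t ht θ
    rw [h4] at h5
    exact h5.unique h2
  rw [h3, hsym (0, 1) (1, 0)]
  refine h1.congr_of_eventuallyEq ?_
  filter_upwards [isOpen_Ioo.mem_nhds ht] with s hs
  exact hDθ s hs θ

/-- The time derivative of a function smooth on `[0,T) × ℝ` is continuous at interior times. -/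
lemma time_deriv_cont {T : ℝ} {f A : ℝ → ℝ → ℝ}
    (hf : ContDiffOn ℝ (⊤ : ℕ∞) (Function.uncurry f) (Ico 0 T ×ˢ (univ : Set ℝ)))
    (hA : ∀ t ∈ Ioo 0 T, ∀ θ, HasDerivAt (fun s => f s θ) (A t θ) t) :
    ContinuousOn (Function.uncurry A) (Ioo 0 T ×ˢ (univ : Set ℝ)) := by
  set Ω : Set (ℝ × ℝ) := Ioo 0 T ×ˢ (univ : Set ℝ) with hΩ
  have hop : IsOpen Ω := isOpen_Ioo.prod isOpen_univ
  have hf' : ContDiffOn ℝ (⊤ : ℕ∞) (Function.uncurry f) Ω :=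
    hf.mono (prod_mono Ioo_subset_Ico_self subset_rfl)
  have h1 : ContinuousOn (fun p => fderiv ℝ (Function.uncurry f) p ((1 : ℝ), (0 : ℝ))) Ω :=
    (hf'.continuousOn_fderiv_of_isOpen hop (by simp)).clm_apply continuousOn_const
  refine h1.congr fun p hp => ?_
  have h2 := ((hf'.differentiableOn (by simp)).differentiableAt (hop.mem_nhds hp)).hasFDerivAt
  exact (hA p.1 hp.1 p.2).unique (partial_t (t := p.1) (θ := p.2) h2)

/-! ### Integrals depending on a parameter -/

/-- Primitives in `θ` of a jointly continuous function are jointly continuous. -/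
lemma primitive_cont {T : ℝ} {f : ℝ → ℝ → ℝ}
    (hf : ContinuousOn (Function.uncurry f) (Ioo 0 T ×ˢ (univ : Set ℝ))) :
    ContinuousOn (Function.uncurry fun t θ => ∫ β in (0:ℝ)..θ, f t β)
      (Ioo 0 T ×ˢ (univ : Set ℝ)) := by
  rw [continuousOn_iff_continuous_domRestrict]
  have h1 : Continuous (Function.uncurry fun (p : ↥(Ioo 0 T ×ˢ (univ : Set ℝ))) (β : ℝ) =>
      f p.1.1 β) := by
    have : Continuous fun q : ↥(Ioo 0 T ×ˢ (univ : Set ℝ)) × ℝ =>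
        (⟨(q.1.1.1, q.2), ⟨q.1.2.1, mem_univ _⟩⟩ : ↥(Ioo 0 T ×ˢ (univ : Set ℝ))) :=
      Continuous.subtype_mk (by fun_prop) _
    exact (continuousOn_iff_continuous_domRestrict.mp hf).comp this
  exact intervalIntegral.continuous_parametric_intervalIntegral_of_continuous h1
    (s := fun p => p.1.2) (by fun_prop)

lemma slice_cont {s : Set ℝ} {f : ℝ → ℝ → ℝ}
    (hf : ContinuousOn (Function.uncurry f) (s ×ˢ (univ : Set ℝ))) {t : ℝ} (ht : t ∈ s) :
    Continuous (f t) := by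
  have : ContinuousOn (fun θ : ℝ => Function.uncurry f (t, θ)) univ :=
    hf.comp (by fun_prop) (fun θ _ => ⟨ht, mem_univ _⟩)
  simpa [continuousOn_univ] using this

lemma slice_cont_time {s : Set ℝ} {f : ℝ → ℝ → ℝ}
    (hf : ContinuousOn (Function.uncurry f) (s ×ˢ (univ : Set ℝ))) (θ : ℝ) :
    ContinuousOn (fun t => f t θ) s :=
  hf.comp (f := fun t : ℝ => (t, θ)) (by fun_prop) (fun _ ht => ⟨ht, mem_univ _⟩)

/-- Differentiation under the integral sign. -/
lemma leibniz {T : ℝ} {f f' : ℝ → ℝ → ℝ}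
    (hf : ContinuousOn (Function.uncurry f) (Ioo 0 T ×ˢ (univ : Set ℝ)))
    (hf' : ContinuousOn (Function.uncurry f') (Ioo 0 T ×ˢ (univ : Set ℝ)))
    (hd : ∀ t ∈ Ioo 0 T, ∀ θ, HasDerivAt (fun s => f s θ) (f' t θ) t) {t : ℝ} (ht : t ∈ Ioo 0 T)
    (a b : ℝ) : HasDerivAt (fun s => ∫ θ in a..b, f s θ) (∫ θ in a..b, f' t θ) t := by
  obtain ⟨ε, hε, hball⟩ := Metric.nhds_basis_closedBall.mem_iff.mp (isOpen_Ioo.mem_nhds ht)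
  have hcomp : IsCompact (Metric.closedBall t ε ×ˢ uIcc a b) :=
    (isCompact_closedBall t ε).prod isCompact_uIcc
  obtain ⟨C, hC⟩ := hcomp.exists_bound_of_continuousOn
    (hf'.mono (prod_mono hball (subset_univ _)))
  have hint := (slice_cont hf' ht).aestronglyMeasurable (μ := volume.restrict (uIoc a b))
  refine (intervalIntegral.hasDerivAt_integral_of_dominated_loc_of_deriv_le
    (bound := fun _ => C) (Metric.closedBall_mem_nhds t hε) ?_
    ((slice_cont hf ht).intervalIntegrable a b) hint ?_ intervalIntegrable_const ?_).2
  · filter_upwards [isOpen_Ioo.mem_nhds ht] with s hs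
    exact (slice_cont hf hs).aestronglyMeasurable
  · exact Filter.Eventually.of_forall fun θ hθ s hs =>
      hC (s, θ) ⟨hs, uIoc_subset_uIcc hθ⟩
  · exact Filter.Eventually.of_forall fun θ _ s hs => hd s (hball hs) θ

/-! ### Geometry of a closed convex curve -/

/-- `ρ` is the curvature, as a function of the tangent angle, of a closed strictly convex curve. -/
structure IsClosedCurve (ρ : ℝ → ℝ) : Prop where
  cont : Continuous ρ
  pos : ∀ θ, 0 < ρ θ
  per : ∀ θ, ρ (θ + 2 * π) = ρ θ
  closeX : ∫ θ in (0:ℝ)..(2 * π), Real.cos θ / ρ θ = 0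
  closeY : ∫ θ in (0:ℝ)..(2 * π), Real.sin θ / ρ θ = 0

/-- First coordinate of the curve starting at the origin. -/
noncomputable def cx (ρ : ℝ → ℝ) (θ : ℝ) : ℝ := ∫ β in (0:ℝ)..θ, Real.cos β / ρ β

/-- Second coordinate of the curve starting at the origin. -/
noncomputable def cy (ρ : ℝ → ℝ) (θ : ℝ) : ℝ := ∫ β in (0:ℝ)..θ, Real.sin β / ρ β

/-- Support function `⟨C, ν⟩` of the curve with respect to its starting point. -/
noncomputable def supp (ρ : ℝ → ℝ) (θ : ℝ) : ℝ := cx ρ θ * Real.sin θ - cy ρ θ * Real.cos θ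

/-- Derivative of the support function. -/
noncomputable def suppD (ρ : ℝ → ℝ) (θ : ℝ) : ℝ := cx ρ θ * Real.cos θ + cy ρ θ * Real.sin θ

lemma encArea_eq (ρ : ℝ → ℝ) :
    encArea ρ = (1 / 2) * ∫ θ in (0:ℝ)..(2 * π), supp ρ θ / ρ θ := rfl

lemma cx_zero (ρ : ℝ → ℝ) : cx ρ 0 = 0 := by simp [cx]

lemma cy_zero (ρ : ℝ → ℝ) : cy ρ 0 = 0 := by simp [cy]

namespace IsClosedCurve

variable {ρ : ℝ → ℝ}

lemma ne (h : IsClosedCurve ρ) (θ : ℝ) : ρ θ ≠ 0 := (h.pos θ).ne'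

lemma cont_cos (h : IsClosedCurve ρ) :
    Continuous fun β => Real.cos β / ρ β := Real.continuous_cos.div h.cont h.ne

lemma cont_sin (h : IsClosedCurve ρ) :
    Continuous fun β => Real.sin β / ρ β := Real.continuous_sin.div h.cont h.ne

lemma cont_one (h : IsClosedCurve ρ) :
    Continuous fun β => 1 / ρ β := continuous_const.div h.cont h.ne

lemma hasDerivAt_cx (h : IsClosedCurve ρ) (θ : ℝ) : HasDerivAt (cx ρ) (Real.cos θ / ρ θ) θ :=
  h.cont_cos.integral_hasStrictDerivAt 0 θ |>.hasDerivAt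

lemma hasDerivAt_cy (h : IsClosedCurve ρ) (θ : ℝ) : HasDerivAt (cy ρ) (Real.sin θ / ρ θ) θ :=
  h.cont_sin.integral_hasStrictDerivAt 0 θ |>.hasDerivAt

lemma cont_cx (h : IsClosedCurve ρ) : Continuous (cx ρ) :=
  continuous_iff_continuousAt.mpr fun θ => (h.hasDerivAt_cx θ).continuousAt

lemma cont_cy (h : IsClosedCurve ρ) : Continuous (cy ρ) :=
  continuous_iff_continuousAt.mpr fun θ => (h.hasDerivAt_cy θ).continuousAt

lemma cont_supp (h : IsClosedCurve ρ) : Continuous (supp ρ) :=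
  (h.cont_cx.mul Real.continuous_sin).sub (h.cont_cy.mul Real.continuous_cos)

lemma hasDerivAt_supp (h : IsClosedCurve ρ) (θ : ℝ) : HasDerivAt (supp ρ) (suppD ρ θ) θ := by
  have := ((h.hasDerivAt_cx θ).mul (Real.hasDerivAt_sin θ)).sub
    ((h.hasDerivAt_cy θ).mul (Real.hasDerivAt_cos θ))
  refine this.congr_deriv ?_
  simp only [suppD]
  ring

/-- The support function solves `p'' + p = 1/ρ`. -/
lemma hasDerivAt_suppD (h : IsClosedCurve ρ)
    (θ : ℝ) : HasDerivAt (suppD ρ) (1 / ρ θ - supp ρ θ) θ := by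
  have := ((h.hasDerivAt_cx θ).mul (Real.hasDerivAt_cos θ)).add
    ((h.hasDerivAt_cy θ).mul (Real.hasDerivAt_sin θ))
  refine this.congr_deriv ?_
  simp only [supp]
  have h1 : 1 / ρ θ = (Real.cos θ ^ 2 + Real.sin θ ^ 2) / ρ θ := by
    rw [Real.cos_sq_add_sin_sq]
  rw [h1]
  ring

lemma cx_per (h : IsClosedCurve ρ) (θ : ℝ) : cx ρ (θ + 2 * π) = cx ρ θ := by
  have hp : Function.Periodic (fun β => Real.cos β / ρ β) (2 * π) := fun β => by
    simp only [Real.cos_add_two_pi, h.per]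
  have h1 := hp.intervalIntegral_add_eq θ 0
  rw [zero_add, h.closeX] at h1
  have h2 := intervalIntegral.integral_add_adjacent_intervals
    (h.cont_cos.intervalIntegrable (μ := volume) 0 θ)
    (h.cont_cos.intervalIntegrable θ (θ + 2 * π))
  simp only [cx]
  rw [← h2, h1, add_zero]

lemma cy_per (h : IsClosedCurve ρ) (θ : ℝ) : cy ρ (θ + 2 * π) = cy ρ θ := by
  have hp : Function.Periodic (fun β => Real.sin β / ρ β) (2 * π) := fun β => by
    simp only [Real.sin_add_two_pi, h.per]
  have h1 := hp.intervalIntegral_add_eq θ 0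
  rw [zero_add, h.closeY] at h1
  have h2 := intervalIntegral.integral_add_adjacent_intervals
    (h.cont_sin.intervalIntegrable (μ := volume) 0 θ)
    (h.cont_sin.intervalIntegrable θ (θ + 2 * π))
  simp only [cy]
  rw [← h2, h1, add_zero]

lemma cx_two_pi (h : IsClosedCurve ρ) : cx ρ (2 * π) = 0 := h.closeX

lemma cy_two_pi (h : IsClosedCurve ρ) : cy ρ (2 * π) = 0 := h.closeY

lemma supp_per (h : IsClosedCurve ρ) (θ : ℝ) : supp ρ (θ + 2 * π) = supp ρ θ := by
  simp only [supp, h.cx_per, h.cy_per, Real.sin_add_two_pi, Real.cos_add_two_pi]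

/-- Convexity: every point `C(β)` lies on the inner side of the tangent line at `C(α)`. -/
lemma dist_nonneg (h : IsClosedCurve ρ) (α β : ℝ) :
    0 ≤ (cx ρ α - cx ρ β) * Real.sin α - (cy ρ α - cy ρ β) * Real.cos α := by
  set D : ℝ → ℝ := fun β =>
    (cx ρ α - cx ρ β) * Real.sin α - (cy ρ α - cy ρ β) * Real.cos α with hD
  have hDper : ∀ β, D (β + 2 * π) = D β := fun β => by simp only [hD, h.cx_per, h.cy_per]
  have hder : ∀ β, HasDerivAt D (Real.sin (β - α) / ρ β) β := by
    intro β
    have := (((h.hasDerivAt_cx β).const_sub (cx ρ α)).mul_const (Real.sin α)).sub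
      (((h.hasDerivAt_cy β).const_sub (cy ρ α)).mul_const (Real.cos α))
    refine this.congr_deriv ?_
    rw [Real.sin_sub]
    ring
  have hcont : Continuous D := continuous_iff_continuousAt.mpr fun β => (hder β).continuousAt
  have hDα : D α = 0 := by simp [hD]
  obtain ⟨y, hy, hy'⟩ := Function.Periodic.exists_mem_Ico (f := D) hDper two_pi_pos β (α - π)
  change 0 ≤ D β
  rw [hy']
  rcases le_total α y with hle | hle
  · have hmono : MonotoneOn D (Icc α (α + π)) := by
      refine monotoneOn_of_deriv_nonneg (convex_Icc _ _) hcont.continuousOn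
        (fun z _ => (hder z).differentiableAt.differentiableWithinAt) fun z hz => ?_
      rw [interior_Icc] at hz
      rw [(hder z).deriv]
      exact div_nonneg (Real.sin_nonneg_of_nonneg_of_le_pi (by linarith [hz.1])
        (by linarith [hz.2])) (h.pos z).le
    rw [← hDα]
    exact hmono ⟨le_rfl, by linarith [Real.pi_pos]⟩ ⟨hle, by linarith [hy.2]⟩ hle
  · have hanti : AntitoneOn D (Icc (α - π) α) := by
      refine antitoneOn_of_deriv_nonpos (convex_Icc _ _) hcont.continuousOn
        (fun z _ => (hder z).differentiableAt.differentiableWithinAt) fun z hz => ?_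
      rw [interior_Icc] at hz
      rw [(hder z).deriv]
      exact div_nonpos_of_nonpos_of_nonneg (Real.sin_nonpos_of_nonpos_of_neg_pi_le
        (by linarith [hz.2]) (by linarith [hz.1])) (h.pos z).le
    rw [← hDα]
    exact hanti ⟨hy.1, hle⟩ ⟨by linarith [Real.pi_pos], le_rfl⟩ hle

lemma supp_nonneg (h : IsClosedCurve ρ) (θ : ℝ) : 0 ≤ supp ρ θ := by
  have := h.dist_nonneg θ 0
  simpa [cx_zero, cy_zero, supp] using this

lemma perim_pos (h : IsClosedCurve ρ) : 0 < perim ρ :=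
  intervalIntegral.intervalIntegral_pos_of_pos_on (h.cont_one.intervalIntegrable _ _)
    (fun θ _ => one_div_pos.mpr (h.pos θ)) two_pi_pos

lemma encArea_pos (h : IsClosedCurve ρ) : 0 < encArea ρ := by
  rw [encArea_eq]
  refine mul_pos (by norm_num) ?_
  refine intervalIntegral.integral_pos two_pi_pos (h.cont_supp.div h.cont h.ne).continuousOn
    (fun θ _ => div_nonneg (h.supp_nonneg θ) (h.pos θ).le) ⟨π, ⟨Real.pi_pos.le, by linarith [Real.pi_pos]⟩, ?_⟩
  refine div_pos ?_ (h.pos π)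
  have : 0 < cy ρ π := intervalIntegral.intervalIntegral_pos_of_pos_on
    (h.cont_sin.intervalIntegrable _ _)
    (fun θ hθ => div_pos (Real.sin_pos_of_pos_of_lt_pi hθ.1 hθ.2) (h.pos θ)) Real.pi_pos
  simpa [supp] using this

lemma hRatio_pos (h : IsClosedCurve ρ) : 0 < hRatio ρ := div_pos h.perim_pos h.encArea_pos

/-- The distance from a tangent line to the starting point is at most half the perimeter, since
the starting point is joined to the contact point by two arcs. -/
lemma supp_le (h : IsClosedCurve ρ) {θ : ℝ} (hθ : θ ∈ Icc 0 (2 * π)) : supp ρ θ ≤ perim ρ / 2 := by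
  have hi1 : ∀ a b, IntervalIntegrable (fun β => 1 / ρ β) volume a b :=
    fun a b => h.cont_one.intervalIntegrable a b
  have hi2 : ∀ a b, IntervalIntegrable (fun β => Real.sin (θ - β) / ρ β) volume a b :=
    fun a b => (Continuous.div (by fun_prop) h.cont h.ne).intervalIntegrable a b
  -- `⟨C(b) - C(a), ν(θ)⟩ = ∫ sin(θ - β)/ρ(β) dβ` over `[a, b]`
  have hprim : ∀ a b, ∫ β in a..b, Real.sin (θ - β) / ρ β =
      (cx ρ b * Real.sin θ - cy ρ b * Real.cos θ) -
      (cx ρ a * Real.sin θ - cy ρ a * Real.cos θ) := by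
    intro a b
    refine intervalIntegral.integral_eq_sub_of_hasDerivAt
      (f := fun β => cx ρ β * Real.sin θ - cy ρ β * Real.cos θ) (fun β _ => ?_) (hi2 a b)
    refine (((h.hasDerivAt_cx β).mul_const (Real.sin θ)).sub
      ((h.hasDerivAt_cy β).mul_const (Real.cos θ))).congr_deriv ?_
    rw [Real.sin_sub]
    ring
  have h1 : supp ρ θ ≤ ∫ β in (0:ℝ)..θ, 1 / ρ β := by
    have e := hprim 0 θ
    simp only [cx_zero, cy_zero, zero_mul, sub_zero] at e
    change cx ρ θ * Real.sin θ - cy ρ θ * Real.cos θ ≤ _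
    rw [← e]
    exact intervalIntegral.integral_mono_on hθ.1 (hi2 _ _) (hi1 _ _) fun β _ =>
      div_le_div_of_nonneg_right (Real.sin_le_one _) (h.pos β).le
  have h2 : supp ρ θ ≤ ∫ β in θ..(2 * π), 1 / ρ β := by
    have e := hprim θ (2 * π)
    simp only [h.cx_two_pi, h.cy_two_pi, zero_mul, sub_zero, zero_sub] at e
    have e' : supp ρ θ = ∫ β in θ..(2 * π), -(Real.sin (θ - β) / ρ β) := by
      rw [intervalIntegral.integral_neg, e]
      simp [supp]
    rw [e']
    refine intervalIntegral.integral_mono_on hθ.2 (hi2 _ _).neg (hi1 _ _) fun β _ => ?_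
    rw [← neg_div]
    exact div_le_div_of_nonneg_right (by linarith [Real.neg_one_le_sin (θ - β)]) (h.pos β).le
  have h3 := intervalIntegral.integral_add_adjacent_intervals (hi1 0 θ) (hi1 θ (2 * π))
  have h4 : perim ρ = ∫ β in (0:ℝ)..(2 * π), 1 / ρ β := rfl
  linarith

/-- A weak isoperimetric inequality, with `4` instead of the optimal `4π`. -/
lemma isoperimetric (h : IsClosedCurve ρ) : 4 * encArea ρ ≤ perim ρ ^ 2 := by
  have h1 : ∫ θ in (0:ℝ)..(2 * π), supp ρ θ / ρ θ ≤
      ∫ θ in (0:ℝ)..(2 * π), perim ρ / 2 * (1 / ρ θ) := by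
    refine intervalIntegral.integral_mono_on two_pi_pos.le
      ((h.cont_supp.div h.cont h.ne).intervalIntegrable _ _)
      ((continuous_const.mul h.cont_one).intervalIntegrable _ _) fun θ hθ => ?_
    rw [mul_one_div]
    exact div_le_div_of_nonneg_right (h.supp_le hθ) (h.pos θ).le
  rw [intervalIntegral.integral_const_mul] at h1
  change _ ≤ perim ρ / 2 * perim ρ at h1
  rw [encArea_eq]
  nlinarith

/-- The disc of radius `area / perimeter` around the arclength centroid lies inside the curve:
the mean distance `∫ d ds / σ` of the curve to any of its tangent lines is at least `λ / σ`,
because `λ = |∮ d dX| ≤ ∮ d ds`, with `X` the coordinate along that tangent line. -/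
lemma exists_center (h : IsClosedCurve ρ) : ∃ a b : ℝ, ∀ θ,
    encArea ρ / perim ρ ≤ supp ρ θ - (a * Real.sin θ - b * Real.cos θ) := by
  have hσ := h.perim_pos
  have hIx : Continuous fun β => cx ρ β / ρ β := h.cont_cx.div h.cont h.ne
  have hIy : Continuous fun β => cy ρ β / ρ β := h.cont_cy.div h.cont h.ne
  refine ⟨(∫ β in (0:ℝ)..(2 * π), cx ρ β / ρ β) / perim ρ,
    (∫ β in (0:ℝ)..(2 * π), cy ρ β / ρ β) / perim ρ, fun α => ?_⟩
  set s := Real.sin α with hs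
  set c := Real.cos α with hc
  set d : ℝ → ℝ := fun β => (cx ρ α - cx ρ β) * s - (cy ρ α - cy ρ β) * c with hd
  have hdc : Continuous d :=
    ((continuous_const.sub h.cont_cx).mul continuous_const).sub
      ((continuous_const.sub h.cont_cy).mul continuous_const)
  have hi1 : IntervalIntegrable (fun β => supp ρ β / ρ β) volume 0 (2 * π) :=
    (h.cont_supp.div h.cont h.ne).intervalIntegrable _ _
  have hi2 : IntervalIntegrable (fun β => d β * Real.cos (β - α) / ρ β) volume 0 (2 * π) :=
    ((hdc.mul (by fun_prop)).div h.cont h.ne).intervalIntegrable _ _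
  have hi3 : IntervalIntegrable (fun β => d β / ρ β) volume 0 (2 * π) :=
    (hdc.div h.cont h.ne).intervalIntegrable _ _
  have hX : ∀ β, HasDerivAt (fun β => cx ρ β * c + cy ρ β * s)
      (Real.cos β / ρ β * c + Real.sin β / ρ β * s) β := fun β =>
    ((h.hasDerivAt_cx β).mul_const c).add ((h.hasDerivAt_cy β).mul_const s)
  have hY : ∀ β, HasDerivAt (fun β => cy ρ β * c - cx ρ β * s)
      (Real.sin β / ρ β * c - Real.cos β / ρ β * s) β := fun β =>
    ((h.hasDerivAt_cy β).mul_const c).sub ((h.hasDerivAt_cx β).mul_const s)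
  have hsc : s ^ 2 + c ^ 2 = 1 := Real.sin_sq_add_cos_sq α
  -- Green's formula in the coordinates `X`, `Y` adapted to the tangent line at angle `α`
  have hgreen : ∫ β in (0:ℝ)..(2 * π),
      ((1 / 2) * (supp ρ β / ρ β) + d β * Real.cos (β - α) / ρ β) = 0 := by
    have := intervalIntegral.integral_eq_sub_of_hasDerivAt (a := 0) (b := 2 * π)
      (f := fun β => (1 / 2) * ((cx ρ β * c + cy ρ β * s) * (cy ρ β * c - cx ρ β * s)) -
        (cy ρ α * c - cx ρ α * s) * (cx ρ β * c + cy ρ β * s))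
      (f' := fun β => (1 / 2) * (supp ρ β / ρ β) + d β * Real.cos (β - α) / ρ β)
      (fun β _ => by
        refine ((((hX β).mul (hY β)).const_mul (1 / 2)).sub
          ((hX β).const_mul (cy ρ α * c - cx ρ α * s))).congr_deriv ?_
        simp only [hd, supp]
        rw [Real.cos_sub, ← hs, ← hc]
        have hne := h.ne β
        field_simp
        linear_combination (cx ρ β * Real.sin β - cy ρ β * Real.cos β) * hsc)
      ((hi1.const_mul _).add hi2)
    rw [this]
    simp only [h.cx_two_pi, h.cy_two_pi, cx_zero, cy_zero]
    ring
  rw [intervalIntegral.integral_add (hi1.const_mul _) hi2, intervalIntegral.integral_const_mul,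
    ← encArea_eq] at hgreen
  have hle : -(∫ β in (0:ℝ)..(2 * π), d β * Real.cos (β - α) / ρ β) ≤
      ∫ β in (0:ℝ)..(2 * π), d β / ρ β := by
    rw [← intervalIntegral.integral_neg]
    refine intervalIntegral.integral_mono_on two_pi_pos.le hi2.neg hi3 fun β _ => ?_
    rw [← neg_div]
    refine div_le_div_of_nonneg_right ?_ (h.pos β).le
    have := h.dist_nonneg α β
    change 0 ≤ d β at this
    nlinarith [Real.neg_one_le_cos (β - α)]
  have hmean : ∫ β in (0:ℝ)..(2 * π), d β / ρ β =
      supp ρ α * perim ρ - ((∫ β in (0:ℝ)..(2 * π), cx ρ β / ρ β) * s -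
        (∫ β in (0:ℝ)..(2 * π), cy ρ β / ρ β) * c) := by
    have e : ∀ β, d β / ρ β = supp ρ α * (1 / ρ β) - (cx ρ β / ρ β * s - cy ρ β / ρ β * c) := by
      intro β
      simp only [hd, supp, ← hs, ← hc]
      ring
    simp_rw [e]
    rw [intervalIntegral.integral_sub, intervalIntegral.integral_sub,
      intervalIntegral.integral_const_mul, intervalIntegral.integral_mul_const,
      intervalIntegral.integral_mul_const]
    · rfl
    · exact (hIx.mul continuous_const).intervalIntegrable _ _
    · exact (hIy.mul continuous_const).intervalIntegrable _ _
    · exact (continuous_const.mul h.cont_one).intervalIntegrable _ _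
    · exact ((hIx.mul continuous_const).sub (hIy.mul continuous_const)).intervalIntegrable _ _
  rw [div_le_iff₀ hσ]
  have hfin : (supp ρ α - ((∫ β in (0:ℝ)..(2 * π), cx ρ β / ρ β) / perim ρ * s -
      (∫ β in (0:ℝ)..(2 * π), cy ρ β / ρ β) / perim ρ * c)) * perim ρ =
      ∫ β in (0:ℝ)..(2 * π), d β / ρ β := by
    rw [hmean]
    field_simp
  rw [hfin]
  linarith

end IsClosedCurve

/-! ### Evolution of perimeter, area and support function -/

/-- The `n`-th spatial derivative of the curvature. -/
noncomputable def W (ρ : ℝ → ℝ → ℝ) (n : ℕ) (t θ : ℝ) : ℝ := iteratedDeriv n (ρ t) θ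

/-- The antiderivative of a function continuous on `(0,T)` with a prescribed value. -/
lemma exists_antideriv {T t0 : ℝ} (ht0 : t0 ∈ Ioo 0 T) {φ : ℝ → ℝ}
    (hφ : ContinuousOn φ (Ioo 0 T)) (a : ℝ) :
    ∃ A : ℝ → ℝ, A t0 = a ∧ ∀ t ∈ Ioo 0 T, HasDerivAt A (φ t) t := by
  refine ⟨fun t => a + ∫ s in t0..t, φ s, by simp, fun t ht => ?_⟩
  have hsub : uIcc t0 t ⊆ Ioo 0 T := (ordConnected_Ioo).uIcc_subset ht0 ht
  refine (intervalIntegral.integral_hasDerivAt_right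
    (hφ.mono hsub).intervalIntegrable ?_ (hφ.continuousAt (isOpen_Ioo.mem_nhds ht))).const_add a
  exact hφ.stronglyMeasurableAtFilter isOpen_Ioo t ht

namespace IsRCFSolution

variable {T : ℝ} {ρ : ℝ → ℝ → ℝ}

lemma smooth (hρ : IsRCFSolution T ρ) :
    ContDiffOn ℝ (⊤ : ℕ∞) (Function.uncurry ρ) (Ico 0 T ×ˢ (univ : Set ℝ)) := hρ.1

lemma pos (hρ : IsRCFSolution T ρ) {t : ℝ} (ht : t ∈ Ico 0 T) (θ : ℝ) : 0 < ρ t θ := hρ.2.1 t ht θ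

lemma closed (hρ : IsRCFSolution T ρ) {t : ℝ} (ht : t ∈ Ico 0 T) : IsClosedCurve (ρ t) where
  cont := slice_cont hρ.1.continuousOn ht
  pos := hρ.2.1 t ht
  per := hρ.2.2.1 t ht
  closeX := hρ.2.2.2.1 t ht
  closeY := hρ.2.2.2.2.1 t ht

lemma W_zero (t θ : ℝ) : W ρ 0 t θ = ρ t θ := by simp [W]

lemma W_cont (hρ : IsRCFSolution T ρ)
    (n : ℕ) : ContinuousOn (Function.uncurry (W ρ n)) (Ico 0 T ×ˢ (univ : Set ℝ)) :=
  (smooth_iter hρ.1 n).continuousOn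

lemma W_cont' (hρ : IsRCFSolution T ρ)
    (n : ℕ) : ContinuousOn (Function.uncurry (W ρ n)) (Ioo 0 T ×ˢ (univ : Set ℝ)) :=
  (hρ.W_cont n).mono (prod_mono Ioo_subset_Ico_self subset_rfl)

lemma W_deriv (hρ : IsRCFSolution T ρ) (n : ℕ) {t : ℝ} (ht : t ∈ Ico 0 T) (θ : ℝ) :
    HasDerivAt (W ρ n t) (W ρ (n + 1) t θ) θ := by
  rw [show W ρ (n + 1) t θ = deriv (W ρ n t) θ from congrFun iteratedDeriv_succ θ]
  exact (smooth_theta (smooth_iter hρ.1 n)).1 t ht θ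

lemma W_per (hρ : IsRCFSolution T ρ) (n : ℕ) {t : ℝ} (ht : t ∈ Ico 0 T) (θ : ℝ) :
    W ρ n t (θ + 2 * π) = W ρ n t θ := by
  have h1 : (fun z => ρ t (z + 2 * π)) = ρ t := funext (hρ.2.2.1 t ht)
  have h2 := congrFun (iteratedDeriv_comp_add_const n (ρ t) (2 * π)) θ
  rw [h1] at h2
  exact h2.symm

/-- Time derivatives of spatial derivatives are obtained by differentiating in space. -/
lemma time_step (hρ : IsRCFSolution T ρ) {n : ℕ} {A B : ℝ → ℝ → ℝ}
    (hA : ∀ t ∈ Ioo 0 T, ∀ θ, HasDerivAt (fun s => W ρ n s θ) (A t θ) t)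
    (hB : ∀ t ∈ Ioo 0 T, ∀ θ, HasDerivAt (A t) (B t θ) θ) :
    ∀ t ∈ Ioo 0 T, ∀ θ, HasDerivAt (fun s => W ρ (n + 1) s θ) (B t θ) t := by
  intro t ht θ
  have := mixed_partials (smooth_iter hρ.1 n) hA hB t ht θ
  simpa only [W, iteratedDeriv_succ] using this

lemma time_zero (hρ : IsRCFSolution T ρ) : ∀ t ∈ Ioo 0 T, ∀ θ, HasDerivAt (fun s => W ρ 0 s θ)
    (W ρ 0 t θ ^ 2 * W ρ 2 t θ + W ρ 0 t θ ^ 2 * (W ρ 0 t θ - 2 * hRatio (ρ t))) t := by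
  intro t ht θ
  have h1 := (hρ.2.2.2.2.2 t ⟨ht.1.le, ht.2⟩ θ).hasDerivAt (Ico_mem_nhds ht.1 ht.2)
  simp only [W_zero]
  exact h1

lemma rho_cont (hρ : IsRCFSolution T ρ) :
    ContinuousOn (Function.uncurry ρ) (Ioo 0 T ×ˢ (univ : Set ℝ)) :=
  hρ.1.continuousOn.mono (prod_mono Ioo_subset_Ico_self subset_rfl)

lemma rho_ne (hρ : IsRCFSolution T ρ) : ∀ p ∈ Ioo 0 T ×ˢ (univ : Set ℝ), ρ p.1 p.2 ≠ 0 :=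
  fun p hp => (hρ.pos (Ioo_subset_Ico_self hp.1) p.2).ne'

lemma rho_inv_cont (hρ : IsRCFSolution T ρ) : ContinuousOn (Function.uncurry fun t θ => 1 / ρ t θ)
    (Ioo 0 T ×ˢ (univ : Set ℝ)) :=
  continuousOn_const.div hρ.rho_cont hρ.rho_ne

/-- `h` is continuous, since the equation expresses it through derivatives of `ρ`. -/
lemma h_cont (hρ : IsRCFSolution T ρ) : ContinuousOn (fun t => hRatio (ρ t)) (Ioo 0 T) := by
  have h1 := slice_cont_time (time_deriv_cont (smooth_iter hρ.1 0) hρ.time_zero) 0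
  have h2 := slice_cont_time (hρ.W_cont' 0) 0
  have h3 := slice_cont_time (hρ.W_cont' 2) 0
  have h4 : ∀ t ∈ Ioo 0 T, W ρ 0 t 0 ^ 2 ≠ 0 := fun t ht => by
    rw [W_zero]
    exact (pow_pos (hρ.pos (Ioo_subset_Ico_self ht) 0) 2).ne'
  refine (((h2.add h3).sub (h1.div (h2.pow 2) h4)).div_const 2).congr fun t ht => ?_
  have h5 : W ρ 0 t 0 ≠ 0 := fun h => h4 t ht (by simp [h])
  simp only [Pi.add_apply, Pi.sub_apply, Pi.div_apply, Pi.pow_apply]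
  field_simp
  ring

lemma h_cont2 (hρ : IsRCFSolution T ρ) :
    ContinuousOn (Function.uncurry fun t (_ : ℝ) => hRatio (ρ t))
    (Ioo 0 T ×ˢ (univ : Set ℝ)) :=
  hρ.h_cont.comp (f := Prod.fst) continuousOn_fst fun _ hp => hp.1

/-- `∂_t (1/ρ) = -(g'' + g)` with `g = ρ - 2h`. -/
lemma inv_time (hρ : IsRCFSolution T ρ) : ∀ t ∈ Ioo 0 T, ∀ θ, HasDerivAt (fun s => 1 / ρ s θ)
    (-(W ρ 2 t θ + (ρ t θ - 2 * hRatio (ρ t)))) t := by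
  intro t ht θ
  have h1 := hρ.time_zero t ht θ
  simp only [W_zero] at h1
  have hp := (hρ.pos (Ioo_subset_Ico_self ht) θ).ne'
  have h2 := h1.fun_inv hp
  simp only [one_div]
  refine h2.congr_deriv ?_
  field_simp

lemma inv_time_cont (hρ : IsRCFSolution T ρ) : ContinuousOn
    (Function.uncurry fun t θ => -(W ρ 2 t θ + (ρ t θ - 2 * hRatio (ρ t))))
    (Ioo 0 T ×ˢ (univ : Set ℝ)) :=
  ((hρ.W_cont' 2).add (hρ.rho_cont.sub (hρ.h_cont2.const_smul (2 : ℝ)))).neg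

lemma rho_deriv (hρ : IsRCFSolution T ρ)
    {t : ℝ} (ht : t ∈ Ico 0 T) (θ : ℝ) : HasDerivAt (ρ t) (W ρ 1 t θ) θ := by
  have := hρ.W_deriv 0 ht θ
  rwa [show W ρ 0 t = ρ t from funext (W_zero t)] at this

lemma W_slice (hρ : IsRCFSolution T ρ) (n : ℕ) {t : ℝ} (ht : t ∈ Ico 0 T) : Continuous (W ρ n t) :=
  slice_cont (hρ.W_cont n) ht

lemma cx_time (hρ : IsRCFSolution T ρ) : ∀ t ∈ Ioo 0 T, ∀ θ, HasDerivAt (fun s => cx (ρ s) θ)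
    (-(W ρ 1 t θ * Real.cos θ + (ρ t θ - 2 * hRatio (ρ t)) * Real.sin θ - W ρ 1 t 0)) t := by
  intro t ht θ
  have htI := Ioo_subset_Ico_self ht
  have hcos : ContinuousOn (fun p : ℝ × ℝ => Real.cos p.2) (Ioo 0 T ×ˢ (univ : Set ℝ)) := by
    fun_prop
  have h1 := leibniz (f := fun s β => Real.cos β / ρ s β)
    (f' := fun s β => Real.cos β * -(W ρ 2 s β + (ρ s β - 2 * hRatio (ρ s))))
    (hcos.div hρ.rho_cont hρ.rho_ne)
    (hcos.mul hρ.inv_time_cont)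
    (fun s hs β => by
      simpa only [mul_one_div] using (hρ.inv_time s hs β).const_mul (Real.cos β)) ht 0 θ
  refine h1.congr_deriv ?_
  rw [intervalIntegral.integral_eq_sub_of_hasDerivAt
    (f := fun β => -(W ρ 1 t β * Real.cos β + (ρ t β - 2 * hRatio (ρ t)) * Real.sin β))]
  · simp
    ring
  · intro β _
    refine ((((hρ.W_deriv 1 htI β).mul (Real.hasDerivAt_cos β)).add
      (((hρ.rho_deriv htI β).sub_const _).mul (Real.hasDerivAt_sin β))).neg).congr_deriv ?_
    ring
  · exact (Real.continuous_cos.mul (slice_cont hρ.inv_time_cont ht)).intervalIntegrable _ _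

lemma cy_time (hρ : IsRCFSolution T ρ) : ∀ t ∈ Ioo 0 T, ∀ θ, HasDerivAt (fun s => cy (ρ s) θ)
    (-(W ρ 1 t θ * Real.sin θ - (ρ t θ - 2 * hRatio (ρ t)) * Real.cos θ +
      (ρ t 0 - 2 * hRatio (ρ t)))) t := by
  intro t ht θ
  have htI := Ioo_subset_Ico_self ht
  have hsin : ContinuousOn (fun p : ℝ × ℝ => Real.sin p.2) (Ioo 0 T ×ˢ (univ : Set ℝ)) := by
    fun_prop
  have h1 := leibniz (f := fun s β => Real.sin β / ρ s β)
    (f' := fun s β => Real.sin β * -(W ρ 2 s β + (ρ s β - 2 * hRatio (ρ s))))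
    (hsin.div hρ.rho_cont hρ.rho_ne)
    (hsin.mul hρ.inv_time_cont)
    (fun s hs β => by
      simpa only [mul_one_div] using (hρ.inv_time s hs β).const_mul (Real.sin β)) ht 0 θ
  refine h1.congr_deriv ?_
  rw [intervalIntegral.integral_eq_sub_of_hasDerivAt
    (f := fun β => -(W ρ 1 t β * Real.sin β - (ρ t β - 2 * hRatio (ρ t)) * Real.cos β))]
  · simp
    ring
  · intro β _
    refine ((((hρ.W_deriv 1 htI β).mul (Real.hasDerivAt_sin β)).sub
      (((hρ.rho_deriv htI β).sub_const _).mul (Real.hasDerivAt_cos β))).neg).congr_deriv ?_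
    ring
  · exact (Real.continuous_sin.mul (slice_cont hρ.inv_time_cont ht)).intervalIntegrable _ _

/-- Up to the motion of the base point of the curve, `∂_t p = -(ρ - 2h)`. -/
lemma supp_time (hρ : IsRCFSolution T ρ) : ∀ t ∈ Ioo 0 T, ∀ θ, HasDerivAt (fun s => supp (ρ s) θ)
    (-(ρ t θ - 2 * hRatio (ρ t)) + W ρ 1 t 0 * Real.sin θ +
      (ρ t 0 - 2 * hRatio (ρ t)) * Real.cos θ) t := by
  intro t ht θ
  refine (((hρ.cx_time t ht θ).mul_const (Real.sin θ)).sub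
    ((hρ.cy_time t ht θ).mul_const (Real.cos θ))).congr_deriv ?_
  linear_combination (-(ρ t θ - 2 * hRatio (ρ t))) * Real.sin_sq_add_cos_sq θ

lemma supp_cont (hρ : IsRCFSolution T ρ) : ContinuousOn (Function.uncurry fun t θ => supp (ρ t) θ)
    (Ioo 0 T ×ˢ (univ : Set ℝ)) := by
  have hcos : ContinuousOn (fun p : ℝ × ℝ => Real.cos p.2) (Ioo 0 T ×ˢ (univ : Set ℝ)) := by
    fun_prop
  have hsin : ContinuousOn (fun p : ℝ × ℝ => Real.sin p.2) (Ioo 0 T ×ˢ (univ : Set ℝ)) := by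
    fun_prop
  have h1 := primitive_cont (f := fun s β => Real.cos β / ρ s β)
    (hcos.div hρ.rho_cont hρ.rho_ne)
  have h2 := primitive_cont (f := fun s β => Real.sin β / ρ s β)
    (hsin.div hρ.rho_cont hρ.rho_ne)
  exact (h1.mul hsin).sub (h2.mul hcos)

lemma perim_time (hρ : IsRCFSolution T ρ)
    {t : ℝ} (ht : t ∈ Ioo 0 T) : HasDerivAt (fun s => perim (ρ s))
    (4 * π * hRatio (ρ t) - ∫ θ in (0:ℝ)..(2 * π), ρ t θ) t := by
  have htI := Ioo_subset_Ico_self ht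
  refine (leibniz hρ.rho_inv_cont hρ.inv_time_cont hρ.inv_time ht 0 (2 * π)).congr_deriv ?_
  have hc := (hρ.closed htI).cont
  have hc2 := hρ.W_slice 2 htI
  have e : ∫ θ in (0:ℝ)..(2 * π), W ρ 2 t θ = 0 := by
    rw [intervalIntegral.integral_eq_sub_of_hasDerivAt (fun β _ => hρ.W_deriv 1 htI β)
      (hc2.intervalIntegrable _ _)]
    have := hρ.W_per 1 htI 0
    rw [zero_add] at this
    rw [this, sub_self]
  have hi : IntervalIntegrable (fun θ => ρ t θ - 2 * hRatio (ρ t)) volume 0 (2 * π) :=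
    (hc.sub continuous_const).intervalIntegrable _ _
  rw [intervalIntegral.integral_neg, intervalIntegral.integral_add (hc2.intervalIntegrable _ _)
    hi, e,
    intervalIntegral.integral_sub (hc.intervalIntegrable _ _)
    (continuous_const.intervalIntegrable _ _), intervalIntegral.integral_const]
  simp only [smul_eq_mul]
  ring

/-- The area evolves by `λ' = -∫ (ρ - 2h) ds = -2π + 2hσ`. -/
lemma area_time (hρ : IsRCFSolution T ρ)
    {t : ℝ} (ht : t ∈ Ioo 0 T) : HasDerivAt (fun s => encArea (ρ s))
    (-(2 * π) + 2 * hRatio (ρ t) * perim (ρ t)) t := by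
  have htI := Ioo_subset_Ico_self ht
  have hcl := hρ.closed htI
  have hcos : ContinuousOn (fun p : ℝ × ℝ => Real.cos p.2) (Ioo 0 T ×ˢ (univ : Set ℝ)) := by
    fun_prop
  have hsin : ContinuousOn (fun p : ℝ × ℝ => Real.sin p.2) (Ioo 0 T ×ˢ (univ : Set ℝ)) := by
    fun_prop
  have hat0 : ∀ {φ : ℝ → ℝ}, ContinuousOn φ (Ioo 0 T) →
      ContinuousOn (fun p : ℝ × ℝ => φ p.1) (Ioo 0 T ×ˢ (univ : Set ℝ)) :=
    fun hφ => hφ.comp (f := Prod.fst) continuousOn_fst fun _ hp => hp.1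
  have hg0 : ContinuousOn (fun t => ρ t 0 - 2 * hRatio (ρ t)) (Ioo 0 T) :=
    (slice_cont_time hρ.rho_cont 0).sub (continuousOn_const.mul hρ.h_cont)
  have hg : ContinuousOn (fun p : ℝ × ℝ => ρ p.1 p.2 - 2 * hRatio (ρ p.1))
      (Ioo 0 T ×ˢ (univ : Set ℝ)) := hρ.rho_cont.sub (continuousOn_const.mul hρ.h_cont2)
  have hsuppt : ContinuousOn (Function.uncurry fun t θ => -(ρ t θ - 2 * hRatio (ρ t)) +
      W ρ 1 t 0 * Real.sin θ + (ρ t 0 - 2 * hRatio (ρ t)) * Real.cos θ)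
      (Ioo 0 T ×ˢ (univ : Set ℝ)) :=
    (hg.neg.add ((hat0 (slice_cont_time (hρ.W_cont' 1) 0)).mul hsin)).add ((hat0 hg0).mul hcos)
  have hint : ContinuousOn (Function.uncurry fun t θ => (-(ρ t θ - 2 * hRatio (ρ t)) +
      W ρ 1 t 0 * Real.sin θ + (ρ t 0 - 2 * hRatio (ρ t)) * Real.cos θ) * (1 / ρ t θ) +
      supp (ρ t) θ * -(W ρ 2 t θ + (ρ t θ - 2 * hRatio (ρ t))))
      (Ioo 0 T ×ˢ (univ : Set ℝ)) := (hsuppt.mul hρ.rho_inv_cont).add (hρ.supp_cont.mul hρ.inv_time_cont)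
  have h1 := leibniz (f := fun s θ => supp (ρ s) θ * (1 / ρ s θ))
    (f' := fun t θ => (-(ρ t θ - 2 * hRatio (ρ t)) +
      W ρ 1 t 0 * Real.sin θ + (ρ t 0 - 2 * hRatio (ρ t)) * Real.cos θ) * (1 / ρ t θ) +
      supp (ρ t) θ * -(W ρ 2 t θ + (ρ t θ - 2 * hRatio (ρ t))))
    (hρ.supp_cont.mul hρ.rho_inv_cont) hint
    (fun s hs θ => (hρ.supp_time s hs θ).mul (hρ.inv_time s hs θ)) ht 0 (2 * π)
  have h2 := h1.const_mul (1 / 2)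
  simp only [mul_one_div] at h2
  refine h2.congr_deriv ?_
  have hs : ∀ θ, HasDerivAt (fun θ => ∫ β in (0:ℝ)..θ, 1 / ρ t β) (1 / ρ t θ) θ := fun θ =>
    (hcl.cont_one.integral_hasStrictDerivAt 0 θ).hasDerivAt
  -- with `g = ρ - 2h`, the integrand is the derivative of
  -- `-(p g' - p' g) + g'(0) y + g(0) x - 2 θ + 4 h s`, `s` being the arclength
  rw [intervalIntegral.integral_eq_sub_of_hasDerivAt
    (f := fun θ => -(supp (ρ t) θ * W ρ 1 t θ - suppD (ρ t) θ * (ρ t θ - 2 * hRatio (ρ t))) +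
      W ρ 1 t 0 * cy (ρ t) θ + (ρ t 0 - 2 * hRatio (ρ t)) * cx (ρ t) θ - 2 * θ +
      4 * hRatio (ρ t) * ∫ β in (0:ℝ)..θ, 1 / ρ t β)]
  · have hp : ∫ β in (0:ℝ)..(2 * π), 1 / ρ t β = perim (ρ t) := rfl
    simp only [supp, suppD, hcl.cx_two_pi, hcl.cy_two_pi, cx_zero, cy_zero, hp,
      intervalIntegral.integral_same]
    ring
  · intro θ _
    refine ((((((((hcl.hasDerivAt_supp θ).mul (hρ.W_deriv 1 htI θ)).sub
      ((hcl.hasDerivAt_suppD θ).mul ((hρ.rho_deriv htI θ).sub_const _))).neg).add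
      ((hcl.hasDerivAt_cy θ).const_mul _)).add ((hcl.hasDerivAt_cx θ).const_mul _)).sub
      ((hasDerivAt_id θ).const_mul 2)).add ((hs θ).const_mul _)).congr_deriv ?_
    have := hcl.ne θ
    field_simp
    ring
  · have := slice_cont hint ht
    simp only [mul_one_div] at this
    exact this.intervalIntegrable _ _

end IsRCFSolution

/-! ### Upper bound on the curvature -/

namespace IsRCFSolution

variable {T : ℝ} {ρ : ℝ → ℝ → ℝ}

lemma h_pos (hρ : IsRCFSolution T ρ)
    {t : ℝ} (ht : t ∈ Ico 0 T) : 0 < hRatio (ρ t) := (hρ.closed ht).hRatio_pos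

/-- The enclosed area is nondecreasing: `λ' = -2π + 2σ²/λ ≥ 8 - 2π > 0`. -/
lemma area_mono (hρ : IsRCFSolution T ρ) : MonotoneOn (fun t => encArea (ρ t)) (Ioo 0 T) := by
  refine monotoneOn_of_deriv_nonneg (convex_Ioo _ _)
    (fun t ht => (hρ.area_time ht).continuousAt.continuousWithinAt)
    (fun t ht => (hρ.area_time (interior_subset ht)).differentiableAt.differentiableWithinAt)
    fun t ht => ?_
  rw [interior_Ioo] at ht
  rw [(hρ.area_time ht).deriv]
  have hcl := hρ.closed (Ioo_subset_Ico_self ht)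
  have h1 : 4 ≤ hRatio (ρ t) * perim (ρ t) := by
    rw [hRatio, div_mul_eq_mul_div, le_div_iff₀ hcl.encArea_pos]
    nlinarith [hcl.isoperimetric]
  linarith [Real.pi_lt_four]

/-- On a bounded time interval the area stays away from zero and the perimeter stays bounded. -/
lemma geometry_bounds (hρ : IsRCFSolution T ρ)
    {t1 : ℝ} (ht1 : t1 ∈ Ioo 0 T) : ∃ L S : ℝ, 0 < L ∧ 0 < S ∧
    ∀ t ∈ Ico t1 T, L ≤ encArea (ρ t) ∧ perim (ρ t) ≤ S := by
  have hsub : ∀ t ∈ Ico t1 T, t ∈ Ioo 0 T := fun t ht => ⟨ht1.1.trans_le ht.1, ht.2⟩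
  set L := encArea (ρ t1) with hL
  have hLpos : 0 < L := (hρ.closed (Ioo_subset_Ico_self ht1)).encArea_pos
  have hσ1 : 0 < perim (ρ t1) := (hρ.closed (Ioo_subset_Ico_self ht1)).perim_pos
  have hA : ∀ t ∈ Ico t1 T, L ≤ encArea (ρ t) := fun t ht => hρ.area_mono ht1 (hsub t ht) ht.1
  set k := 4 * π / L with hk
  have hkpos : 0 < k := div_pos (by linarith [Real.pi_pos]) hLpos
  have hder : ∀ t ∈ Ioo 0 T, HasDerivAt (fun t => perim (ρ t) * Real.exp (-k * (t - t1)))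
      ((4 * π * hRatio (ρ t) - ∫ θ in (0:ℝ)..(2 * π), ρ t θ) * Real.exp (-k * (t - t1)) +
        perim (ρ t) * (Real.exp (-k * (t - t1)) * (-k * 1))) t := fun t ht =>
    (hρ.perim_time ht).mul (((hasDerivAt_id t).sub_const t1).const_mul (-k)).exp
  -- Grönwall: `σ' ≤ 4π h ≤ k σ`
  have hanti : AntitoneOn (fun t => perim (ρ t) * Real.exp (-k * (t - t1))) (Ico t1 T) := by
    refine antitoneOn_of_deriv_nonpos (convex_Ico _ _)
      (fun t ht => (hder t (hsub t ht)).continuousAt.continuousWithinAt)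
      (fun t ht => (hder t (hsub t (interior_subset ht))).differentiableAt.differentiableWithinAt)
      fun t ht => ?_
    replace ht := interior_subset ht
    have htI := Ioo_subset_Ico_self (hsub t ht)
    have hcl := hρ.closed htI
    rw [(hder t (hsub t ht)).deriv]
    have h1 : 4 * π * hRatio (ρ t) ≤ k * perim (ρ t) := by
      have : hRatio (ρ t) ≤ perim (ρ t) / L :=
        div_le_div_of_nonneg_left hcl.perim_pos.le hLpos (hA t ht)
      calc 4 * π * hRatio (ρ t) ≤ 4 * π * (perim (ρ t) / L) :=
            mul_le_mul_of_nonneg_left this (by linarith [Real.pi_pos])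
        _ = k * perim (ρ t) := by rw [hk]; ring
    have h2 : 0 ≤ ∫ θ in (0:ℝ)..(2 * π), ρ t θ :=
      intervalIntegral.integral_nonneg two_pi_pos.le fun θ _ => (hρ.pos htI θ).le
    nlinarith [Real.exp_pos (-k * (t - t1))]
  refine ⟨L, perim (ρ t1) * Real.exp (k * (T - t1)), hLpos, by positivity, fun t ht =>
    ⟨hA t ht, ?_⟩⟩
  have h1 := hanti (left_mem_Ico.mpr ht1.2) ht ht.1
  simp only [sub_self, mul_zero, Real.exp_zero, mul_one] at h1
  have h2 : perim (ρ t) ≤ perim (ρ t1) * Real.exp (k * (t - t1)) := by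
    have h3 := mul_le_mul_of_nonneg_right h1 (Real.exp_pos (k * (t - t1))).le
    rwa [mul_assoc, ← Real.exp_add, neg_mul, neg_add_cancel, Real.exp_zero, mul_one] at h3
  refine h2.trans (mul_le_mul_of_nonneg_left (Real.exp_le_exp.mpr ?_) hσ1.le)
  exact mul_le_mul_of_nonneg_left (by linarith [ht.2]) hkpos.le

/-- The support function with respect to a fixed origin, evolving by `∂_t P = 2h - ρ`; the origin
is chosen well inside the curve at time `t0`. -/
lemma exists_support (hρ : IsRCFSolution T ρ) {t0 : ℝ} (ht0 : t0 ∈ Ioo 0 T) : ∃ P P1 : ℝ → ℝ → ℝ,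
    ContinuousOn (Function.uncurry P) (Ioo 0 T ×ˢ (univ : Set ℝ)) ∧
    (∀ t ∈ Ioo 0 T, ∀ θ, P t (θ + 2 * π) = P t θ) ∧
    (∀ t ∈ Ioo 0 T, ∀ θ, HasDerivAt (P t) (P1 t θ) θ) ∧
    (∀ t ∈ Ioo 0 T, ∀ θ, HasDerivAt (P1 t) (1 / ρ t θ - P t θ) θ) ∧
    (∀ t ∈ Ioo 0 T, ∀ θ, HasDerivAt (fun s => P s θ) (2 * hRatio (ρ t) - ρ t θ) t) ∧
    (∀ θ, encArea (ρ t0) / perim (ρ t0) ≤ P t0 θ) := by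
  obtain ⟨a, b, hab⟩ := (hρ.closed (Ioo_subset_Ico_self ht0)).exists_center
  have hg0 : ContinuousOn (fun t => ρ t 0 - 2 * hRatio (ρ t)) (Ioo 0 T) :=
    (slice_cont_time hρ.rho_cont 0).sub (continuousOn_const.mul hρ.h_cont)
  -- `(A, B)` is the position of the fixed origin in the frame of the base point of the curve
  obtain ⟨A, hA0, hA⟩ := exists_antideriv ht0 (slice_cont_time (hρ.W_cont' 1) 0) a
  obtain ⟨B, hB0, hB⟩ := exists_antideriv ht0 hg0.neg b
  refine ⟨fun t θ => supp (ρ t) θ - (A t * Real.sin θ - B t * Real.cos θ),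
    fun t θ => suppD (ρ t) θ - (A t * Real.cos θ + B t * Real.sin θ), ?_, ?_, ?_, ?_, ?_, ?_⟩
  · have hAc : ContinuousOn (fun p : ℝ × ℝ => A p.1) (Ioo 0 T ×ˢ (univ : Set ℝ)) :=
      ContinuousOn.comp (g := A) (fun t ht => (hA t ht).continuousAt.continuousWithinAt)
        continuousOn_fst fun _ hp => hp.1
    have hBc : ContinuousOn (fun p : ℝ × ℝ => B p.1) (Ioo 0 T ×ˢ (univ : Set ℝ)) :=
      ContinuousOn.comp (g := B) (fun t ht => (hB t ht).continuousAt.continuousWithinAt)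
        continuousOn_fst fun _ hp => hp.1
    exact hρ.supp_cont.sub ((hAc.mul (by fun_prop)).sub (hBc.mul (by fun_prop)))
  · intro t ht θ
    simp only [(hρ.closed (Ioo_subset_Ico_self ht)).supp_per, Real.sin_add_two_pi,
      Real.cos_add_two_pi]
  · intro t ht θ
    refine (((hρ.closed (Ioo_subset_Ico_self ht)).hasDerivAt_supp θ).sub
      (((Real.hasDerivAt_sin θ).const_mul (A t)).sub
        ((Real.hasDerivAt_cos θ).const_mul (B t)))).congr_deriv ?_
    ring
  · intro t ht θ
    refine (((hρ.closed (Ioo_subset_Ico_self ht)).hasDerivAt_suppD θ).sub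
      (((Real.hasDerivAt_cos θ).const_mul (A t)).add
        ((Real.hasDerivAt_sin θ).const_mul (B t)))).congr_deriv ?_
    ring
  · intro t ht θ
    refine ((hρ.supp_time t ht θ).sub (((hA t ht).mul_const (Real.sin θ)).sub
        ((hB t ht).mul_const (Real.cos θ)))).congr_deriv ?_
    simp only [Pi.neg_apply]
    ring
  · simpa only [hA0, hB0] using hab

/-- Curvature and `h` are bounded up to the final time. The curvature bound is Tso's: near the
final time the origin stays at distance at least `2c` inside the curve, and the maximum principle
applies to `ρ / (P - c)`, here in the form that `ρ - k (P - c)` stays negative for large `k`. -/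
lemma curvature_bound (hρ : IsRCFSolution T ρ)
    (hT : 0 < T) : ∃ t0 ∈ Ioo 0 T, ∃ K H : ℝ, ∀ t ∈ Ico t0 T,
    hRatio (ρ t) ≤ H ∧ ∀ θ, ρ t θ ≤ K := by
  have ht1 : T / 2 ∈ Ioo 0 T := ⟨by linarith, by linarith⟩
  obtain ⟨L, S, hL, hS, hLS⟩ := hρ.geometry_bounds ht1
  set c := L / (4 * S) with hc
  have hcpos : 0 < c := by positivity
  set t0 := max (T / 2) (T - 2 * c ^ 2) with ht0d
  have ht0T : t0 < T := max_lt ht1.2 (by nlinarith)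
  have ht01 : T / 2 ≤ t0 := le_max_left _ _
  have ht0c : T - 2 * c ^ 2 ≤ t0 := le_max_right _ _
  have ht0 : t0 ∈ Ioo 0 T := ⟨by linarith, ht0T⟩
  have hsub : ∀ t ∈ Ico t0 T, t ∈ Ioo 0 T := fun t ht => ⟨ht0.1.trans_le ht.1, ht.2⟩
  have hsub' : ∀ t ∈ Ioo t0 T, t ∈ Ioo 0 T := fun t ht => hsub t (Ioo_subset_Ico_self ht)
  have hsubp : Ico t0 T ×ˢ (univ : Set ℝ) ⊆ Ioo 0 T ×ˢ univ := prod_mono hsub subset_rfl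
  have hH : ∀ t ∈ Ico t0 T, hRatio (ρ t) ≤ S / L := fun t ht => by
    have h1 := hLS t ⟨ht01.trans ht.1, ht.2⟩
    exact div_le_div₀ hS.le h1.2 hL h1.1
  obtain ⟨P, P1, hPc, hPper, hP1, hP2, hPt, hP0⟩ := hρ.exists_support ht0
  have hPstart : ∀ θ, 4 * c ≤ P t0 θ := fun θ => by
    refine le_trans ?_ (hP0 θ)
    have h1 := hLS t0 ⟨ht01, ht0T⟩
    calc 4 * c = L / S := by rw [hc]; field_simp
      _ ≤ _ := div_le_div₀ (hρ.closed (Ioo_subset_Ico_self ht0)).encArea_pos.le h1.1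
        (hρ.closed (Ioo_subset_Ico_self ht0)).perim_pos h1.2
  have hφ : ∀ t ∈ Ico t0 T, 2 * c ≤ 3 * c - (t - t0) / (2 * c) := fun t ht => by
    have : (t - t0) / (2 * c) ≤ c := by
      rw [div_le_iff₀ (by linarith)]
      nlinarith [ht.2]
    linarith
  have hφd : ∀ t, HasDerivAt (fun t => 3 * c - (t - t0) / (2 * c)) (-(1 / (2 * c))) t := fun t => by
    simpa using (((hasDerivAt_id t).sub_const t0).div_const (2 * c)).const_sub (3 * c)
  have hφc : ContinuousOn (fun p : ℝ × ℝ => 3 * c - (p.1 - t0) / (2 * c))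
      (Ico t0 T ×ˢ (univ : Set ℝ)) := Continuous.continuousOn (by fun_prop)
  -- the disc shrinking with speed `1 / (2c)` stays inside the curve
  have hPlow := max_principle (t0 := t0) (T := T)
    (F := fun t θ => (3 * c - (t - t0) / (2 * c)) - P t θ)
    (Ft := fun t θ => -(1 / (2 * c)) - (2 * hRatio (ρ t) - ρ t θ))
    (F1 := fun t θ => -(P1 t θ)) (F2 := fun t θ => -(1 / ρ t θ - P t θ))
    (hφc.sub (hPc.mono hsubp))
    (fun t ht θ => by rw [hPper t (hsub t ht)])
    (fun t ht θ => (hφd t).sub (hPt t (hsub' t ht) θ))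
    (fun t ht θ => (hP1 t (hsub' t ht) θ).const_sub _)
    (fun t ht θ => (hP2 t (hsub' t ht) θ).neg)
    (fun θ => by
      have := hPstart θ
      simp only [sub_self, zero_div]
      linarith)
    (fun t ht θ hF _ h2 => by
      have h3 := hφ t (Ioo_subset_Ico_self ht)
      have htI := Ioo_subset_Ico_self (hsub' t ht)
      have hr := hρ.pos htI θ
      have h4 := hρ.h_pos htI
      have h5 : 2 * c ≤ 1 / ρ t θ := by linarith
      have h6 : ρ t θ ≤ 1 / (2 * c) := by
        rw [le_div_iff₀ hr] at h5
        rw [le_div_iff₀ (by linarith)]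
        linarith
      linarith)
  have hP2c : ∀ t ∈ Ico t0 T, ∀ θ, 2 * c < P t θ := fun t ht θ => by
    have h1 := hPlow t ht θ
    have h2 := hφ t ht
    linarith
  -- choice of `k`: larger than the initial value of `ρ / (P - c)`, and `c² k > 2`
  obtain ⟨M, hM⟩ := periodic_bdd (slice_cont hρ.rho_cont ht0)
    (hρ.closed (Ioo_subset_Ico_self ht0)).per
  set k := (max M 0 + 1) / c + 3 / c ^ 2 with hk
  have hM0 : 0 ≤ max M 0 := le_max_right _ _
  have hkpos : 0 < k := by positivity
  have hk1 : M < k * c := by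
    have h1 : k * c = max M 0 + 1 + 3 / c := by rw [hk]; field_simp
    have h2 : 0 < 3 / c := by positivity
    linarith [le_max_left M 0]
  have hk2 : 2 < c * (k * c) := by
    have h1 : c * (k * c) = c * (max M 0 + 1) + 3 := by rw [hk]; field_simp
    nlinarith
  have hQ := max_principle (t0 := t0) (T := T)
    (F := fun t θ => W ρ 0 t θ - k * (P t θ - c))
    (Ft := fun t θ => (W ρ 0 t θ ^ 2 * W ρ 2 t θ +
      W ρ 0 t θ ^ 2 * (W ρ 0 t θ - 2 * hRatio (ρ t))) - k * (2 * hRatio (ρ t) - ρ t θ))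
    (F1 := fun t θ => W ρ 1 t θ - k * P1 t θ)
    (F2 := fun t θ => W ρ 2 t θ - k * (1 / ρ t θ - P t θ))
    (((hρ.W_cont' 0).mono hsubp).sub
      (continuousOn_const.mul ((hPc.mono hsubp).sub continuousOn_const)))
    (fun t ht θ => by
      rw [hPper t (hsub t ht), hρ.W_per 0 (Ioo_subset_Ico_self (hsub t ht))])
    (fun t ht θ => (hρ.time_zero t (hsub' t ht) θ).sub
      (((hPt t (hsub' t ht) θ).sub_const c).const_mul k))
    (fun t ht θ => (hρ.W_deriv 0 (Ioo_subset_Ico_self (hsub' t ht)) θ).sub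
      (((hP1 t (hsub' t ht) θ).sub_const c).const_mul k))
    (fun t ht θ => (hρ.W_deriv 1 (Ioo_subset_Ico_self (hsub' t ht)) θ).sub
      ((hP2 t (hsub' t ht) θ).const_mul k))
    (fun θ => by
      have h1 := hM θ
      have h2 := hP2c t0 ⟨le_rfl, ht0T⟩ θ
      simp only [W_zero]
      nlinarith)
    (fun t ht θ hF _ h2 => by
      simp only [W_zero] at hF ⊢
      have htI := Ioo_subset_Ico_self (hsub' t ht)
      have hr := hρ.pos htI θ
      have h4 := hρ.h_pos htI
      have h5 := hP2c t (Ioo_subset_Ico_self ht) θ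
      have hrk : k * c < ρ t θ := by nlinarith
      have h6 : ρ t θ ^ 2 * W ρ 2 t θ ≤ k * ρ t θ - ρ t θ ^ 2 * (k * P t θ) := by
        have h7 : ρ t θ ^ 2 * W ρ 2 t θ ≤ ρ t θ ^ 2 * (k * (1 / ρ t θ - P t θ)) :=
          mul_le_mul_of_nonneg_left (by linarith) (sq_nonneg _)
        refine h7.trans_eq ?_
        field_simp
      have h8 : k * P t θ = ρ t θ + k * c := by linarith
      rw [h8] at h6
      have h9 : 0 < k * ρ t θ * (c * ρ t θ - 2) := mul_pos (mul_pos hkpos hr) (by nlinarith)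
      have h10 : 0 < ρ t θ ^ 2 * hRatio (ρ t) := by positivity
      have h11 : 0 < k * hRatio (ρ t) := by positivity
      nlinarith)
  -- `P` is bounded above, because `∂_t P ≤ 2h`
  obtain ⟨M', hM'⟩ := periodic_bdd (slice_cont hPc ht0) (hPper t0 ht0)
  set b := 2 * (S / L) + 1 with hb
  have hPup := max_principle (t0 := t0) (T := T)
    (F := fun t θ => P t θ - (M' + 1 + b * (t - t0)))
    (Ft := fun t θ => 2 * hRatio (ρ t) - ρ t θ - b * 1)
    (F1 := P1) (F2 := fun t θ => 1 / ρ t θ - P t θ)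
    ((hPc.mono hsubp).sub (Continuous.continuousOn (by fun_prop)))
    (fun t ht θ => by rw [hPper t (hsub t ht)])
    (fun t ht θ => (hPt t (hsub' t ht) θ).sub
      ((((hasDerivAt_id t).sub_const t0).const_mul b).const_add (M' + 1)))
    (fun t ht θ => (hP1 t (hsub' t ht) θ).sub_const _)
    (fun t ht θ => hP2 t (hsub' t ht) θ)
    (fun θ => by
      have := hM' θ
      simp only [sub_self, mul_zero]
      linarith)
    (fun t ht θ _ _ _ => by
      have htI := Ioo_subset_Ico_self (hsub' t ht)
      have hr := hρ.pos htI θ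
      have := hH t (Ioo_subset_Ico_self ht)
      linarith)
  refine ⟨t0, ht0, k * (M' + 1 + b * (T - t0)), S / L, fun t ht => ⟨hH t ht, fun θ => ?_⟩⟩
  have h1 := hQ t ht θ
  have h2 := hPup t ht θ
  simp only [W_zero] at h1
  have hbpos : 0 < b := by positivity
  have h3 : b * (t - t0) ≤ b * (T - t0) := mul_le_mul_of_nonneg_left (by linarith [ht.2]) hbpos.le
  have h4 : k * (P t θ - c) ≤ k * (M' + 1 + b * (T - t0)) :=
    mul_le_mul_of_nonneg_left (by linarith) hkpos.le
  linarith

end IsRCFSolution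

/-! ### Bounds on the derivatives of the curvature -/

/-- `IsJetPoly ρ k f` says that `f` is a polynomial, with real coefficients, in `h` and in the
spatial derivatives of `ρ` of order at most `k`. -/
inductive IsJetPoly (ρ : ℝ → ℝ → ℝ) (k : ℕ) : (ℝ → ℝ → ℝ) → Prop
  | const (c : ℝ) : IsJetPoly ρ k (fun _ _ => c)
  | ratio : IsJetPoly ρ k (fun t _ => hRatio (ρ t))
  | var (j : ℕ) (hj : j ≤ k) : IsJetPoly ρ k (W ρ j)
  | add {f g : ℝ → ℝ → ℝ} (hf : IsJetPoly ρ k f) (hg : IsJetPoly ρ k g) :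
      IsJetPoly ρ k (fun t θ => f t θ + g t θ)
  | mul {f g : ℝ → ℝ → ℝ} (hf : IsJetPoly ρ k f) (hg : IsJetPoly ρ k g) :
      IsJetPoly ρ k (fun t θ => f t θ * g t θ)

namespace IsJetPoly

variable {ρ : ℝ → ℝ → ℝ} {k : ℕ}

lemma mono {l : ℕ} (hkl : k ≤ l) {f : ℝ → ℝ → ℝ} (hf : IsJetPoly ρ k f) : IsJetPoly ρ l f := by
  induction hf with
  | const c => exact .const c
  | ratio => exact .ratio
  | var j hj => exact .var j (hj.trans hkl)
  | add _ _ h1 h2 => exact .add h1 h2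
  | mul _ _ h1 h2 => exact .mul h1 h2

lemma bounded {S : Set ℝ} {H : ℝ} (hH : ∀ t ∈ S, |hRatio (ρ t)| ≤ H)
    (hW : ∀ j ≤ k, ∃ M, ∀ t ∈ S, ∀ θ, |W ρ j t θ| ≤ M) {f : ℝ → ℝ → ℝ} (hf : IsJetPoly ρ k f) :
    ∃ M, ∀ t ∈ S, ∀ θ, |f t θ| ≤ M := by
  induction hf with
  | const c => exact ⟨|c|, fun _ _ _ => le_rfl⟩
  | ratio => exact ⟨H, fun t ht _ => hH t ht⟩
  | var j hj => exact hW j hj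
  | add _ _ h1 h2 =>
    obtain ⟨M1, h1⟩ := h1
    obtain ⟨M2, h2⟩ := h2
    exact ⟨M1 + M2, fun t ht θ => (abs_add_le _ _).trans (add_le_add (h1 t ht θ) (h2 t ht θ))⟩
  | mul _ _ h1 h2 =>
    obtain ⟨M1, h1⟩ := h1
    obtain ⟨M2, h2⟩ := h2
    refine ⟨M1 * M2, fun t ht θ => ?_⟩
    rw [abs_mul]
    exact mul_le_mul (h1 t ht θ) (h2 t ht θ) (abs_nonneg _) ((abs_nonneg _).trans (h1 t ht θ))

/-- The spatial derivative of a polynomial of order `k` is linear in `W (k + 1)`. -/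
lemma exists_deriv {T : ℝ} (hρ : IsRCFSolution T ρ) {f : ℝ → ℝ → ℝ} (hf : IsJetPoly ρ k f) :
    ∃ a b, IsJetPoly ρ k a ∧ IsJetPoly ρ k b ∧ ∀ t ∈ Ico 0 T, ∀ θ,
      HasDerivAt (f t) (a t θ * W ρ (k + 1) t θ + b t θ) θ := by
  induction hf with
  | const c =>
    exact ⟨_, _, .const 0, .const 0, fun t _ θ => (hasDerivAt_const θ c).congr_deriv (by simp)⟩
  | ratio =>
    exact ⟨_, _, .const 0, .const 0, fun t _ θ => (hasDerivAt_const θ _).congr_deriv (by simp)⟩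
  | var j hj =>
    rcases hj.lt_or_eq with h | rfl
    · exact ⟨_, _, .const 0, .var (j + 1) h, fun t ht θ =>
        (hρ.W_deriv j ht θ).congr_deriv (by simp)⟩
    · exact ⟨_, _, .const 1, .const 0, fun t ht θ =>
        (hρ.W_deriv j ht θ).congr_deriv (by simp)⟩
  | add _ _ h1 h2 =>
    obtain ⟨a, b, ha, hb, h1⟩ := h1
    obtain ⟨a', b', ha', hb', h2⟩ := h2
    exact ⟨_, _, ha.add ha', hb.add hb', fun t ht θ =>
      ((h1 t ht θ).add (h2 t ht θ)).congr_deriv (by ring)⟩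
  | mul hf hg h1 h2 =>
    obtain ⟨a, b, ha, hb, h1⟩ := h1
    obtain ⟨a', b', ha', hb', h2⟩ := h2
    exact ⟨_, _, (ha.mul hg).add (hf.mul ha'), (hb.mul hg).add (hf.mul hb'), fun t ht θ =>
      ((h1 t ht θ).mul (h2 t ht θ)).congr_deriv (by ring)⟩

end IsJetPoly

namespace IsRCFSolution

variable {T : ℝ} {ρ : ℝ → ℝ → ℝ}

lemma time_one (hρ : IsRCFSolution T ρ) : ∀ t ∈ Ioo 0 T, ∀ θ, HasDerivAt (fun s => W ρ 1 s θ)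
    (W ρ 0 t θ ^ 2 * W ρ 3 t θ + 2 * W ρ 0 t θ * W ρ 1 t θ * W ρ 2 t θ +
      3 * W ρ 0 t θ ^ 2 * W ρ 1 t θ - 4 * hRatio (ρ t) * W ρ 0 t θ * W ρ 1 t θ) t := by
  refine hρ.time_step hρ.time_zero fun t ht θ => ?_
  have h0 := hρ.W_deriv 0 (Ioo_subset_Ico_self ht) θ
  have h2 := hρ.W_deriv 2 (Ioo_subset_Ico_self ht) θ
  refine (((h0.pow 2).mul h2).add ((h0.pow 2).mul (h0.sub_const _))).congr_deriv ?_
  simp only [Pi.pow_apply]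
  ring

lemma time_two (hρ : IsRCFSolution T ρ) : ∀ t ∈ Ioo 0 T, ∀ θ, HasDerivAt (fun s => W ρ 2 s θ)
    (W ρ 0 t θ ^ 2 * W ρ 4 t θ + 4 * W ρ 0 t θ * W ρ 1 t θ * W ρ 3 t θ +
      2 * W ρ 1 t θ ^ 2 * W ρ 2 t θ + 2 * W ρ 0 t θ * W ρ 2 t θ ^ 2 +
      3 * W ρ 0 t θ ^ 2 * W ρ 2 t θ + 6 * W ρ 0 t θ * W ρ 1 t θ ^ 2 -
      4 * hRatio (ρ t) * W ρ 0 t θ * W ρ 2 t θ - 4 * hRatio (ρ t) * W ρ 1 t θ ^ 2) t := by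
  refine hρ.time_step hρ.time_one fun t ht θ => ?_
  have h0 := hρ.W_deriv 0 (Ioo_subset_Ico_self ht) θ
  have h1 := hρ.W_deriv 1 (Ioo_subset_Ico_self ht) θ
  have h2 := hρ.W_deriv 2 (Ioo_subset_Ico_self ht) θ
  have h3 := hρ.W_deriv 3 (Ioo_subset_Ico_self ht) θ
  refine ((((h0.pow 2).mul h3).add (((h0.const_mul 2).mul h1).mul h2)).add
    (((h0.pow 2).const_mul 3).mul h1)).sub ((h0.const_mul (4 * hRatio (ρ t))).mul h1)
    |>.congr_deriv ?_
  simp only [Pi.pow_apply, Pi.mul_apply]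
  ring

/-- From order three on, the evolution equation of a derivative is linear in that derivative,
with coefficients built from derivatives of lower order. -/
lemma time_linear (hρ : IsRCFSolution T ρ)
    (m : ℕ) : ∃ c f, IsJetPoly ρ 2 c ∧ IsJetPoly ρ (m + 2) f ∧
    ∀ t ∈ Ioo 0 T, ∀ θ, HasDerivAt (fun s => W ρ (m + 3) s θ)
      (W ρ 0 t θ ^ 2 * W ρ (m + 5) t θ +
        2 * (m + 3) * W ρ 0 t θ * W ρ 1 t θ * W ρ (m + 4) t θ +
        c t θ * W ρ (m + 3) t θ + f t θ) t := by
  have p0 : IsJetPoly ρ 2 (W ρ 0) := .var 0 (by norm_num)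
  have p1 : IsJetPoly ρ 2 (W ρ 1) := .var 1 (by norm_num)
  have p2 : IsJetPoly ρ 2 (W ρ 2) := .var 2 le_rfl
  induction m with
  | zero =>
    -- the part of `∂_t W 2` containing no derivative of order above two
    have hR := ((((((IsJetPoly.const 2).mul (p1.mul p1)).mul p2).add
      (((IsJetPoly.const 2).mul p0).mul (p2.mul p2))).add
      (((IsJetPoly.const 3).mul (p0.mul p0)).mul p2)).add
      (((IsJetPoly.const 6).mul p0).mul (p1.mul p1))).add
      (((IsJetPoly.const (-4)).mul IsJetPoly.ratio).mul ((p0.mul p2).add (p1.mul p1)))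
    obtain ⟨a, b, ha, hb, hD⟩ := hR.exists_deriv hρ
    refine ⟨_, b, ((IsJetPoly.const 4).mul ((p1.mul p1).add (p0.mul p2))).add ha, hb, ?_⟩
    refine hρ.time_step hρ.time_two fun t ht θ => ?_
    have h0 := hρ.W_deriv 0 (Ioo_subset_Ico_self ht) θ
    have h1 := hρ.W_deriv 1 (Ioo_subset_Ico_self ht) θ
    have h3 := hρ.W_deriv 3 (Ioo_subset_Ico_self ht) θ
    have h4 := hρ.W_deriv 4 (Ioo_subset_Ico_self ht) θ
    have hd := (((h0.pow 2).mul h4).add (((h0.const_mul 4).mul h1).mul h3)).add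
      (hD t (Ioo_subset_Ico_self ht) θ)
    refine (hd.congr_of_eventuallyEq (.of_forall fun x => ?_)).congr_deriv ?_
    · simp only [Pi.pow_apply, Pi.mul_apply, Pi.add_apply]
      ring
    · simp only [Pi.pow_apply, Pi.mul_apply]
      push_cast
      ring
  | succ m ih =>
    obtain ⟨c, f, hc, hf, hm⟩ := ih
    obtain ⟨a, b, ha, hb, hDc⟩ := hc.exists_deriv hρ
    obtain ⟨a', b', ha', hb', hDf⟩ := hf.exists_deriv hρ
    have hle : 2 ≤ m + 1 + 2 := by omega
    have hle' : m + 2 ≤ m + 1 + 2 := by omega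
    refine ⟨_, _, ((IsJetPoly.const (2 * (m + 3))).mul ((p1.mul p1).add (p0.mul p2))).add hc,
      ((((ha.mono hle).mul (.var 3 (by omega))).add (hb.mono hle)).mul
        (.var (m + 3) (by omega))).add
      (((ha'.mono hle').mul (.var (m + 3) (by omega))).add (hb'.mono hle')), ?_⟩
    refine hρ.time_step hm fun t ht θ => ?_
    have htI := Ioo_subset_Ico_self ht
    have h0 := hρ.W_deriv 0 htI θ
    have h1 := hρ.W_deriv 1 htI θ
    have hd := ((((h0.pow 2).mul (hρ.W_deriv (m + 5) htI θ)).add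
      (((h0.const_mul (2 * ((m : ℝ) + 3))).mul h1).mul (hρ.W_deriv (m + 4) htI θ))).add
      ((hDc t htI θ).mul (hρ.W_deriv (m + 3) htI θ))).add (hDf t htI θ)
    refine hd.congr_deriv ?_
    simp only [Pi.pow_apply, Pi.mul_apply]
    rw [show m + 1 + 5 = m + 5 + 1 by ring, show m + 1 + 4 = m + 4 + 1 by ring,
      show m + 1 + 3 = m + 3 + 1 by ring, show m + 2 + 1 = m + 3 by ring,
      show m + 4 + 1 = m + 5 by ring]
    push_cast
    ring

end IsRCFSolution

namespace IsRCFSolution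

variable {T : ℝ} {ρ : ℝ → ℝ → ℝ}

lemma lower_bound (hρ : IsRCFSolution T ρ)
    {t0 H : ℝ} (ht0 : t0 ∈ Ioo 0 T) (hH : ∀ t ∈ Ico t0 T, hRatio (ρ t) ≤ H) :
    ∃ δ > 0, ∀ t ∈ Ico t0 T, ∀ θ, δ ≤ ρ t θ := by
  have hsub : ∀ t ∈ Ico t0 T, t ∈ Ioo 0 T := fun t ht => ⟨ht0.1.trans_le ht.1, ht.2⟩
  have hsubI : ∀ t ∈ Ioo t0 T, t ∈ Ioo 0 T := fun t ht => hsub t (Ioo_subset_Ico_self ht)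
  have hsubC : ∀ t ∈ Ico t0 T, t ∈ Ico 0 T := fun t ht => Ioo_subset_Ico_self (hsub t ht)
  have hH0 : 0 ≤ H := (hρ.h_pos (hsubC t0 ⟨le_rfl, ht0.2⟩)).le.trans (hH t0 ⟨le_rfl, ht0.2⟩)
  obtain ⟨M, hM⟩ := upper_bound (t0 := t0) (T := T) (C := 2 * H)
    (Z := fun t θ => 1 / ρ t θ)
    (Zt := fun t θ => -(W ρ 2 t θ + (ρ t θ - 2 * hRatio (ρ t))))
    (Z1 := fun t θ => -W ρ 1 t θ / ρ t θ ^ 2)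
    (Z2 := fun t θ => (-W ρ 2 t θ * ρ t θ ^ 2 + 2 * ρ t θ * W ρ 1 t θ ^ 2) / (ρ t θ ^ 2) ^ 2)
    (by linarith) ht0.2
    (hρ.rho_inv_cont.mono (prod_mono hsub subset_rfl))
    (fun t ht θ => by rw [(hρ.closed (hsubC t ht)).per θ])
    (fun t ht θ => hρ.inv_time t (hsubI t ht) θ)
    (fun t ht θ => by
      have htI := hsubC t (Ioo_subset_Ico_self ht)
      simpa only [one_div] using (hρ.rho_deriv htI θ).fun_inv (hρ.pos htI θ).ne')
    (fun t ht θ => by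
      have htI := hsubC t (Ioo_subset_Ico_self ht)
      refine ((hρ.W_deriv 1 htI θ).fun_neg.fun_div ((hρ.rho_deriv htI θ).fun_pow 2)
        (pow_ne_zero 2 (hρ.pos htI θ).ne')).congr_deriv ?_
      congr 1
      push_cast
      ring)
    (fun t ht θ hZ h1 h2 => by
      have htI := hsubC t (Ioo_subset_Ico_self ht)
      have hp := hρ.pos htI θ
      have hu : W ρ 1 t θ = 0 := by
        rcases div_eq_zero_iff.1 h1 with h | h
        · linarith
        · exact absurd h (pow_ne_zero 2 hp.ne')
      have hv : 0 ≤ W ρ 2 t θ := by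
        by_contra hneg
        push Not at hneg
        refine absurd h2 (not_le.2 ?_)
        have := mul_pos_of_neg_of_neg hneg (neg_neg_of_pos (pow_pos hp 2))
        rw [hu]
        refine div_pos (by nlinarith) (by positivity)
      have := hH t (Ioo_subset_Ico_self ht)
      have : 0 ≤ 2 * H * (1 / ρ t θ) := by positivity
      linarith)
  have hM0 : 0 < M := (one_div_pos.2 (hρ.pos (hsubC t0 ⟨le_rfl, ht0.2⟩) 0)).trans_le
    (hM t0 ⟨le_rfl, ht0.2⟩ 0)
  exact ⟨1 / M, one_div_pos.2 hM0, fun t ht θ =>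
    (one_div_le (hρ.pos (hsubC t ht) θ) hM0).1 (hM t ht θ)⟩

/-- The maximum principle in both directions for the `n`-th spatial derivative: if its
evolution equation is linear up to bounded coefficients, it stays bounded. -/
lemma two_sided (hρ : IsRCFSolution T ρ)
    {t0 C : ℝ} (ht0 : t0 ∈ Ioo 0 T) (hC : 0 ≤ C) {n : ℕ} {A b R : ℝ → ℝ → ℝ}
    (ha : ∀ t ∈ Ioo t0 T, ∀ θ, 0 ≤ A t θ)
    (hR : ∀ t ∈ Ioo t0 T, ∀ θ, |R t θ| ≤ C * (1 + |W ρ n t θ|))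
    (hd : ∀ t ∈ Ioo 0 T, ∀ θ, HasDerivAt (fun s => W ρ n s θ)
      (A t θ * W ρ (n + 2) t θ + b t θ * W ρ (n + 1) t θ + R t θ) t) :
    ∃ M, ∀ t ∈ Ico t0 T, ∀ θ, |W ρ n t θ| ≤ M := by
  have hsubI : ∀ t ∈ Ioo t0 T, t ∈ Ioo 0 T := fun t ht => ⟨ht0.1.trans ht.1, ht.2⟩
  have hsubC : ∀ t ∈ Ico t0 T, t ∈ Ico 0 T := fun t ht => ⟨ht0.1.le.trans ht.1, ht.2⟩
  have hcont : ContinuousOn (Function.uncurry (W ρ n)) (Ico t0 T ×ˢ (univ : Set ℝ)) :=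
    (hρ.W_cont n).mono (prod_mono hsubC subset_rfl)
  obtain ⟨M1, h1⟩ := upper_bound hC ht0.2 hcont (fun t ht θ => hρ.W_per n (hsubC t ht) θ)
    (fun t ht θ => hd t (hsubI t ht) θ)
    (fun t ht θ => hρ.W_deriv n (Ioo_subset_Ico_self (hsubI t ht)) θ)
    (fun t ht θ => hρ.W_deriv (n + 1) (Ioo_subset_Ico_self (hsubI t ht)) θ)
    (fun t ht θ hZ hZ1 hZ2 => by
      have h := hR t ht θ
      rw [abs_of_pos hZ] at h
      have := mul_nonpos_of_nonneg_of_nonpos (ha t ht θ) hZ2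
      rw [hZ1]
      linarith [le_abs_self (R t θ)])
  obtain ⟨M2, h2⟩ := upper_bound (Z := fun t θ => -W ρ n t θ) hC ht0.2 hcont.neg
    (fun t ht θ => by rw [hρ.W_per n (hsubC t ht) θ])
    (fun t ht θ => (hd t (hsubI t ht) θ).fun_neg)
    (fun t ht θ => (hρ.W_deriv n (Ioo_subset_Ico_self (hsubI t ht)) θ).fun_neg)
    (fun t ht θ => (hρ.W_deriv (n + 1) (Ioo_subset_Ico_self (hsubI t ht)) θ).fun_neg)
    (fun t ht θ hZ hZ1 hZ2 => by
      have h := hR t ht θ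
      rw [abs_of_neg (neg_pos.1 hZ)] at h
      have := mul_nonneg (ha t ht θ) (neg_nonpos.1 hZ2)
      rw [neg_eq_zero.1 hZ1]
      linarith [neg_abs_le (R t θ)])
  refine ⟨max M1 M2, fun t ht θ => abs_le.2 ⟨?_, (h1 t ht θ).trans (le_max_left _ _)⟩⟩
  linarith [h2 t ht θ, le_max_right M1 M2]

lemma first_bound (hρ : IsRCFSolution T ρ) {t0 K H : ℝ} (ht0 : t0 ∈ Ioo 0 T)
    (hKH : ∀ t ∈ Ico t0 T, hRatio (ρ t) ≤ H ∧ ∀ θ, ρ t θ ≤ K) :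
    ∃ M, ∀ t ∈ Ico t0 T, ∀ θ, |W ρ 1 t θ| ≤ M := by
  have hsubC : ∀ t ∈ Ico t0 T, t ∈ Ico 0 T := fun t ht => ⟨ht0.1.le.trans ht.1, ht.2⟩
  have hK : 0 ≤ K := (hρ.pos (hsubC t0 ⟨le_rfl, ht0.2⟩) 0).le.trans ((hKH t0 ⟨le_rfl, ht0.2⟩).2 0)
  have hH : 0 ≤ H := (hρ.h_pos (hsubC t0 ⟨le_rfl, ht0.2⟩)).le.trans (hKH t0 ⟨le_rfl, ht0.2⟩).1
  refine hρ.two_sided (C := 3 * K ^ 2 + 4 * H * K) ht0 (by positivity) (n := 1)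
    (A := fun t θ => W ρ 0 t θ ^ 2) (b := fun t θ => 2 * W ρ 0 t θ * W ρ 1 t θ)
    (R := fun t θ => (3 * W ρ 0 t θ ^ 2 - 4 * hRatio (ρ t) * W ρ 0 t θ) * W ρ 1 t θ)
    (fun _ _ _ => sq_nonneg _) (fun t ht θ => ?_)
    (fun t ht θ => (hρ.time_one t ht θ).congr_deriv (by ring))
  have htC := Ioo_subset_Ico_self ht
  have hp := hρ.pos (hsubC t htC) θ
  have hh := hρ.h_pos (hsubC t htC)
  have e1 : ρ t θ ^ 2 ≤ K ^ 2 := pow_le_pow_left₀ hp.le ((hKH t htC).2 θ) 2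
  have e2 : hRatio (ρ t) * ρ t θ ≤ H * K :=
    mul_le_mul (hKH t htC).1 ((hKH t htC).2 θ) hp.le hH
  have e3 : 0 ≤ hRatio (ρ t) * ρ t θ := by positivity
  have e4 : |3 * ρ t θ ^ 2 - 4 * hRatio (ρ t) * ρ t θ| ≤ 3 * K ^ 2 + 4 * H * K :=
    abs_le.2 ⟨by nlinarith [sq_nonneg (ρ t θ)], by nlinarith⟩
  rw [abs_mul, W_zero]
  exact mul_le_mul e4 (by linarith) (abs_nonneg _) (by positivity)

/-- The second derivative `v`. The quadratic term `2 ρ v ^ 2` in its evolution equation has the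
good sign for the lower bound. For the upper bound it is absorbed by passing to
`v + A (∂_θ ρ) ^ 2` with a large constant `A`. -/
lemma second_bound (hρ : IsRCFSolution T ρ) {t0 K H : ℝ} (ht0 : t0 ∈ Ioo 0 T)
    (hKH : ∀ t ∈ Ico t0 T, hRatio (ρ t) ≤ H ∧ ∀ θ, ρ t θ ≤ K) :
    ∃ M, ∀ t ∈ Ico t0 T, ∀ θ, |W ρ 2 t θ| ≤ M := by
  have hsubI : ∀ t ∈ Ioo t0 T, t ∈ Ioo 0 T := fun t ht => ⟨ht0.1.trans ht.1, ht.2⟩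
  have hsubC : ∀ t ∈ Ico t0 T, t ∈ Ico 0 T := fun t ht => ⟨ht0.1.le.trans ht.1, ht.2⟩
  have hsubD : ∀ t ∈ Ioo t0 T, t ∈ Ico 0 T := fun t ht => ⟨ht0.1.le.trans ht.1.le, ht.2⟩
  have hK : 0 ≤ K := (hρ.pos (hsubC t0 ⟨le_rfl, ht0.2⟩) 0).le.trans ((hKH t0 ⟨le_rfl, ht0.2⟩).2 0)
  have hH : 0 ≤ H := (hρ.h_pos (hsubC t0 ⟨le_rfl, ht0.2⟩)).le.trans (hKH t0 ⟨le_rfl, ht0.2⟩).1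
  obtain ⟨δ, hδ, hlow⟩ := hρ.lower_bound ht0 fun t ht => (hKH t ht).1
  obtain ⟨m, hm⟩ := hρ.first_bound ht0 hKH
  have hm0 : 0 ≤ m := (abs_nonneg _).trans (hm t0 ⟨le_rfl, ht0.2⟩ 0)
  have hcont : ∀ n, ContinuousOn (Function.uncurry (W ρ n)) (Ico t0 T ×ˢ (univ : Set ℝ)) :=
    fun n => (hρ.W_cont n).mono (prod_mono hsubC subset_rfl)
  have hu2 : ∀ t ∈ Ico t0 T, ∀ θ, W ρ 1 t θ ^ 2 ≤ m ^ 2 := fun t ht θ =>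
    sq_le_sq' (abs_le.1 (hm t ht θ)).1 (abs_le.1 (hm t ht θ)).2
  have hr2 : ∀ t ∈ Ico t0 T, ∀ θ, ρ t θ ^ 2 ≤ K ^ 2 := fun t ht θ =>
    pow_le_pow_left₀ (hρ.pos (hsubC t ht) θ).le ((hKH t ht).2 θ) 2
  have hhr : ∀ t ∈ Ico t0 T, ∀ θ, hRatio (ρ t) * ρ t θ ≤ H * K := fun t ht θ =>
    mul_le_mul (hKH t ht).1 ((hKH t ht).2 θ) (hρ.pos (hsubC t ht) θ).le hH
  have hru : ∀ t ∈ Ico t0 T, ∀ θ, ρ t θ * W ρ 1 t θ ^ 2 ≤ K * m ^ 2 := fun t ht θ =>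
    mul_le_mul ((hKH t ht).2 θ) (hu2 t ht θ) (sq_nonneg _) hK
  obtain ⟨M1, h1⟩ := upper_bound (Z := fun t θ => -W ρ 2 t θ)
    (C := 2 * m ^ 2 + 3 * K ^ 2 + 4 * (H * m ^ 2)) (by positivity) ht0.2 (hcont 2).neg
    (fun t ht θ => by rw [hρ.W_per 2 (hsubC t ht) θ])
    (fun t ht θ => (hρ.time_two t (hsubI t ht) θ).fun_neg)
    (fun t ht θ => (hρ.W_deriv 2 (hsubD t ht) θ).fun_neg)
    (fun t ht θ => (hρ.W_deriv 3 (hsubD t ht) θ).fun_neg)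
    (fun t ht θ hZ hZ1 hZ2 => by
      have htC := Ioo_subset_Ico_self ht
      have hp := hρ.pos (hsubC t htC) θ
      have hh := hρ.h_pos (hsubC t htC)
      rw [neg_eq_zero.1 hZ1, W_zero]
      have e1 : 0 ≤ ρ t θ ^ 2 * W ρ 4 t θ := mul_nonneg (sq_nonneg _) (neg_nonpos.1 hZ2)
      have e2 : 0 ≤ ρ t θ * W ρ 2 t θ ^ 2 := by positivity
      have e3 : 0 ≤ ρ t θ * W ρ 1 t θ ^ 2 := by positivity
      have e4 : 0 ≤ (hRatio (ρ t) * ρ t θ) * -W ρ 2 t θ := by positivity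
      have e5 : W ρ 1 t θ ^ 2 * -W ρ 2 t θ ≤ m ^ 2 * -W ρ 2 t θ :=
        mul_le_mul_of_nonneg_right (hu2 t htC θ) hZ.le
      have e6 : ρ t θ ^ 2 * -W ρ 2 t θ ≤ K ^ 2 * -W ρ 2 t θ :=
        mul_le_mul_of_nonneg_right (hr2 t htC θ) hZ.le
      have e7 : hRatio (ρ t) * W ρ 1 t θ ^ 2 ≤ H * m ^ 2 :=
        mul_le_mul (hKH t htC).1 (hu2 t htC θ) (sq_nonneg _) hH
      have e8 : 0 ≤ H * m ^ 2 * -W ρ 2 t θ := by positivity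
      have e9 : 0 ≤ m ^ 2 := sq_nonneg m
      have e10 : 0 ≤ K ^ 2 := sq_nonneg K
      linarith)
  set A := 2 / δ with hA
  have hA0 : 0 < A := by positivity
  -- a bound for the coefficient of `v`, and one for the terms free of `v`
  set B := 4 * A * (K * m ^ 2) + 2 * m ^ 2 + 3 * K ^ 2 + 4 * (H * K) with hB
  set D := 6 * (K * m ^ 2) + 6 * A * (K ^ 2 * m ^ 2) with hD
  have hE : ContinuousOn (fun p : ℝ × ℝ => W ρ 2 p.1 p.2 + A * W ρ 1 p.1 p.2 ^ 2)
      (Ico t0 T ×ˢ (univ : Set ℝ)) :=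
    (hcont 2).add (continuousOn_const.mul ((hcont 1).pow 2))
  obtain ⟨M2, h2⟩ := upper_bound (Z := fun t θ => W ρ 2 t θ + A * W ρ 1 t θ ^ 2)
    (Z1 := fun t θ => W ρ 3 t θ + 2 * A * (W ρ 1 t θ * W ρ 2 t θ))
    (Z2 := fun t θ => W ρ 4 t θ +
      2 * A * (W ρ 2 t θ * W ρ 2 t θ + W ρ 1 t θ * W ρ 3 t θ))
    (C := B ^ 2 / (8 * δ) + D) (by positivity) ht0.2
    hE
    (fun t ht θ => by rw [hρ.W_per 2 (hsubC t ht) θ, hρ.W_per 1 (hsubC t ht) θ])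
    (fun t ht θ => (hρ.time_two t (hsubI t ht) θ).fun_add
      (((hρ.time_one t (hsubI t ht) θ).fun_pow 2).const_mul A))
    (fun t ht θ => ((hρ.W_deriv 2 (hsubD t ht) θ).fun_add
      (((hρ.W_deriv 1 (hsubD t ht) θ).fun_pow 2).const_mul A)).congr_deriv (by push_cast; ring))
    (fun t ht θ => (hρ.W_deriv 3 (hsubD t ht) θ).fun_add
      (((hρ.W_deriv 1 (hsubD t ht) θ).fun_mul (hρ.W_deriv 2 (hsubD t ht) θ)).const_mul (2 * A)))
    (fun t ht θ hZ hZ1 hZ2 => by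
      have htC := Ioo_subset_Ico_self ht
      have hp := hρ.pos (hsubC t htC) θ
      have hh := hρ.h_pos (hsubC t htC)
      have hl := hlow t htC θ
      have hu := hu2 t htC θ
      have hr := hr2 t htC θ
      have hhr := hhr t htC θ
      have hru := hru t htC θ
      rw [W_zero]
      set r := ρ t θ
      set u := W ρ 1 t θ
      set v := W ρ 2 t θ
      set w := W ρ 3 t θ
      set z := W ρ 4 t θ
      set h := hRatio (ρ t)
      have hw : w = -(2 * A * (u * v)) := by linarith
      have e1 : r ^ 2 * (z + 2 * A * (v * v + u * w)) ≤ 0 :=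
        mul_nonpos_of_nonneg_of_nonpos (sq_nonneg _) hZ2
      have e2 : 2 ≤ A * r := by
        rw [hA, div_mul_eq_mul_div, le_div_iff₀ hδ]
        linarith
      have e3 : (2 * r - 2 * A * r ^ 2) * v ^ 2 ≤ -(2 * δ) * v ^ 2 := by
        refine mul_le_mul_of_nonneg_right ?_ (sq_nonneg _)
        have := mul_le_mul_of_nonneg_right e2 hp.le
        linarith
      set c := -(4 * A * (r * u ^ 2)) + 2 * u ^ 2 + 3 * r ^ 2 - 4 * (h * r) with hc
      have f1 : 0 ≤ r * u ^ 2 := by positivity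
      have f2 : 0 ≤ h * r := by positivity
      have f3 : 0 ≤ h * u ^ 2 := by positivity
      have f4 : 0 ≤ A * (h * r * u ^ 2) := by positivity
      have f5 : A * (r * u ^ 2) ≤ A * (K * m ^ 2) := mul_le_mul_of_nonneg_left hru hA0.le
      have f6 : A * (r ^ 2 * u ^ 2) ≤ A * (K ^ 2 * m ^ 2) := mul_le_mul_of_nonneg_left
        (mul_le_mul hr hu (sq_nonneg _) (sq_nonneg _)) hA0.le
      have f7 : 0 ≤ A * (r * u ^ 2) := by positivity
      have f8 : 0 ≤ H * K := by positivity
      have f9 : 0 ≤ A * (K * m ^ 2) := by positivity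
      have e4 : c ^ 2 ≤ B ^ 2 := by
        refine sq_le_sq' ?_ ?_
        · linarith [sq_nonneg u, sq_nonneg r, sq_nonneg m, sq_nonneg K]
        · linarith
      have e5 : c * v - 2 * δ * v ^ 2 ≤ B ^ 2 / (8 * δ) := by
        rw [le_div_iff₀ (by positivity)]
        nlinarith [sq_nonneg (4 * δ * v - c)]
      have e6 : 0 ≤ (B ^ 2 / (8 * δ) + D) * (v + A * u ^ 2) := mul_nonneg (by positivity) hZ.le
      have key : r ^ 2 * z + 4 * r * u * w + 2 * u ^ 2 * v + 2 * r * v ^ 2 + 3 * r ^ 2 * v +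
          6 * r * u ^ 2 - 4 * h * r * v - 4 * h * u ^ 2 + A * (2 * u ^ (2 - 1) *
          (r ^ 2 * w + 2 * r * u * v + 3 * r ^ 2 * u - 4 * h * r * u)) =
          r ^ 2 * (z + 2 * A * (v * v + u * w)) + (2 * r - 2 * A * r ^ 2) * v ^ 2 + c * v +
          (6 * (r * u ^ 2) - 4 * (h * u ^ 2) + 6 * (A * (r ^ 2 * u ^ 2)) -
            8 * (A * (h * r * u ^ 2))) := by
        rw [hw, hc]
        norm_num
        ring
      push_cast
      rw [key]
      linarith)
  refine ⟨max M1 M2, fun t ht θ => abs_le.2 ⟨?_, ?_⟩⟩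
  · linarith [h1 t ht θ, le_max_left M1 M2]
  · have := h2 t ht θ
    have : 0 ≤ A * W ρ 1 t θ ^ 2 := by positivity
    linarith [le_max_right M1 M2]

lemma all_bounds (hρ : IsRCFSolution T ρ) {t0 K H : ℝ} (ht0 : t0 ∈ Ioo 0 T)
    (hKH : ∀ t ∈ Ico t0 T, hRatio (ρ t) ≤ H ∧ ∀ θ, ρ t θ ≤ K) (n : ℕ) :
    ∃ M, ∀ t ∈ Ico t0 T, ∀ θ, |W ρ n t θ| ≤ M := by
  have hsubC : ∀ t ∈ Ico t0 T, t ∈ Ico 0 T := fun t ht => ⟨ht0.1.le.trans ht.1, ht.2⟩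
  have hHabs : ∀ t ∈ Ico t0 T, |hRatio (ρ t)| ≤ H := fun t ht => by
    rw [abs_of_pos (hρ.h_pos (hsubC t ht))]
    exact (hKH t ht).1
  induction n using Nat.strong_induction_on with
  | _ n ih =>
    match n, ih with
    | 0, _ =>
      refine ⟨K, fun t ht θ => ?_⟩
      rw [W_zero, abs_of_pos (hρ.pos (hsubC t ht) θ)]
      exact (hKH t ht).2 θ
    | 1, _ => exact hρ.first_bound ht0 hKH
    | 2, _ => exact hρ.second_bound ht0 hKH
    | m + 3, ih =>
      obtain ⟨c, f, hc, hf, hd⟩ := hρ.time_linear m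
      obtain ⟨C1, h1⟩ := hc.bounded hHabs fun j hj => ih j (by omega)
      obtain ⟨C2, h2⟩ := hf.bounded hHabs fun j hj => ih j (by omega)
      refine hρ.two_sided (C := max C1 C2) ht0
        (le_max_of_le_left ((abs_nonneg _).trans (h1 t0 ⟨le_rfl, ht0.2⟩ 0)))
        (A := fun t θ => W ρ 0 t θ ^ 2)
        (b := fun t θ => 2 * (m + 3) * W ρ 0 t θ * W ρ 1 t θ)
        (R := fun t θ => c t θ * W ρ (m + 3) t θ + f t θ)
        (fun _ _ _ => sq_nonneg _) (fun t ht θ => ?_)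
        (fun t ht θ => (hd t ht θ).congr_deriv (by ring))
      have htC := Ioo_subset_Ico_self ht
      refine (abs_add_le _ _).trans ?_
      rw [abs_mul]
      have e1 := mul_le_mul_of_nonneg_right ((h1 t htC θ).trans (le_max_left C1 C2))
        (abs_nonneg (W ρ (m + 3) t θ))
      have e2 := (h2 t htC θ).trans (le_max_right C1 C2)
      linarith

end IsRCFSolution

/-- If `T < ∞` (here `T` is a real number), then for every `n`, the
`n`-th spatial derivative of the curvature along the renormalized curvature flow is
uniformly bounded on `[0,T) × ℝ`. -/
theorem stmt13 (T : ℝ) (ρ : ℝ → ℝ → ℝ) (hρ : IsRCFSolution T ρ) :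
    ∀ n : ℕ, ∃ M : ℝ, ∀ t ∈ Ico (0:ℝ) T, ∀ θ : ℝ, |iteratedDeriv n (ρ t) θ| ≤ M := by
  intro n
  rcases le_or_gt T 0 with hT | hT
  · exact ⟨0, fun t ht => absurd (ht.1.trans_lt ht.2) hT.not_gt⟩
  obtain ⟨t0, ht0, K, H, hKH⟩ := hρ.curvature_bound hT
  obtain ⟨M1, h1⟩ := hρ.all_bounds ht0 hKH n
  -- on `[0,t0]` compactness and periodicity suffice
  obtain ⟨M2, h2⟩ := ((isCompact_Icc (a := (0 : ℝ)) (b := t0)).prod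
    (isCompact_Icc (a := (0 : ℝ)) (b := 2 * π))).exists_bound_of_continuousOn
    ((hρ.W_cont n).mono (prod_mono (fun t ht => ⟨ht.1, ht.2.trans_lt ht0.2⟩) (subset_univ _)))
  refine ⟨max M1 M2, fun t ht θ => ?_⟩
  rcases le_or_gt t0 t with h | h
  · exact (h1 t ⟨h, ht.2⟩ θ).trans (le_max_left _ _)
  · obtain ⟨y, hy, hyθ⟩ := Function.Periodic.exists_mem_Ico₀
      (f := W ρ n t) (c := 2 * π) (hρ.W_per n ht) Real.two_pi_pos θ
    refine le_trans ?_ (le_max_right M1 M2)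
    have := h2 (t, y) ⟨⟨ht.1, h.le⟩, Ico_subset_Icc_self hy⟩
    rw [Real.norm_eq_abs] at this
    exact (congrArg abs hyθ).trans_le this
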